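/- arXiv:2302.07975 — 3 statements merged into one kernel-verified Lean document; each statement's English description precedes it below -/
import Mathlib

section
/- There exists a universal constant K > 0 with the following property (utility of task-weighted noisy gradient descent in the Lipschitz convex case, Theorem 4(a)). Let d, m ≥ 1 and n₁,…,n_m ≥ 1 be integers, Γ > 0, and let C ⊆ ℝ^d be a nonempty compact convex set of Euclidean diameter D > 0. For each i ∈ {1,…,m} and j ∈ {1,…,n_i}, let ℓ_{ij} : ℝ^d → ℝ be convex, differentiable, and Γ-Lipschitz on C; set L_i = ∑_{j=1}^{n_i} ℓ_{ij} and let θ*_i be a minimizer of L_i over C. Let ω₁,…,ω_m > 0 be task weights and set T = ⌈(2/d)·(∑_{i=1}^m n_i²)/(∑_{i=1}^m 1/ω_i²)⌉. On a probability space, let (ξ_i⁽ᵗ⁾)_{i ∈ [m], t ∈ [T]} be independent random vectors in ℝ^d, each with the standard Gaussian law (d independent N(0,1) coordinates). For each i, let θ_i⁽⁰⁾ ∈ C be deterministic and define the noisy gradient descent iterates θ_i⁽ᵗ⁾ = Π_C( θ_i⁽ᵗ⁻¹⁾ − η_i⁽ᵗ⁾( ω_i ∇L_i(θ_i⁽ᵗ⁻¹⁾)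 + Γ√(T/2)·ξ_i⁽ᵗ⁾ ) ) with step sizes η_i⁽ᵗ⁾ = D/( Γ·√(ω_i² n_i² + T d/2) · √t ). Then ∑_{i=1}^m E[L_i(θ_i⁽ᵀ⁾)] − ∑_{i=1}^m L_i(θ*_i) ≤ K · D · Γ · (1 + log T) · √( m d · ∑_{i=1}^m 1/ω_i² ). -/
open MeasureTheory ProbabilityTheory

lemma seq_tele (b e : ℕ → ℝ) (D G : ℝ) (hD : 0 < D) (hG : 0 < G) (s N : ℕ) (hsN : s ≤ N)
    (heD : ∀ t, s ≤ t → t < N → e t ≤ D ^ 2)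
    (hb : ∀ t, s ≤ t → t < N → 2 * (D / (G * √((t:ℝ) + 1))) * b t ≤
      e t - e (t+1) + 2 * (D / (G * √((t:ℝ) + 1))) ^ 2 * G ^ 2) :
    ∑ t ∈ Finset.Ico s N, b t ≤
      G / (2 * D) * (√s * e s - √N * e N) + 5 / 2 * D * G * (√N - √s) := by
  induction N, hsN using Nat.le_induction with
  | base => simp
  | succ N hsN ih =>
    have ih' := ih (fun t h1 h2 => heD t h1 (by omega)) (fun t h1 h2 => hb t h1 (by omega))
    rw [Finset.sum_Ico_succ_top hsN]
    have h := hb N hsN (by omega)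
    push_cast
    set r := √((N:ℝ)+1) with hr
    set q := √(N:ℝ) with hq
    have hr2 : r ^ 2 = N + 1 := Real.sq_sqrt (by positivity)
    have hq2 : q ^ 2 = N := Real.sq_sqrt (by positivity)
    have hr0 : 0 < r := Real.sqrt_pos.2 (by positivity)
    have hq0 : 0 ≤ q := Real.sqrt_nonneg _
    have hqr : q ≤ r := Real.sqrt_le_sqrt (by linarith)
    have h1 : b N ≤ G / (2 * D) * r * (e N - e (N+1)) + D * G / r := by
      have h2 : 2 * (D / (G * r)) * b N * (G * r / (2 * D)) ≤ (e N - e (N+1) + 2 * (D / (G * r)) ^ 2 * G ^ 2) * (G * r / (2 * D)) :=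
        mul_le_mul_of_nonneg_right h (by positivity)
      have e1 : 2 * (D / (G * r)) * b N * (G * r / (2 * D)) = b N := by field_simp
      have e2 : (e N - e (N+1) + 2 * (D / (G * r)) ^ 2 * G ^ 2) * (G * r / (2 * D)) = G / (2 * D) * r * (e N - e (N+1)) + D * G / r := by
        field_simp
      linarith
    have h3 : 1 / r ≤ 2 * (r - q) := by
      rw [div_le_iff₀ hr0]; nlinarith
    have h4 : D * G / r ≤ 2 * (D * G) * (r - q) := by
      have := mul_le_mul_of_nonneg_left h3 (by positivity : 0 ≤ D * G)
      calc D * G / r = D * G * (1 / r) := by ring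
        _ ≤ _ := by linarith
    have h5 : G / (2 * D) * (r - q) * e N ≤ D * G / 2 * (r - q) := by
      calc G / (2 * D) * (r - q) * e N ≤ G / (2 * D) * (r - q) * D ^ 2 :=
            mul_le_mul_of_nonneg_left (heD N hsN (by omega)) (mul_nonneg (by positivity) (by linarith))
        _ = _ := by field_simp
    nlinarith

lemma last_iterate (a : ℕ → ℝ) (e : ℕ → ℕ → ℝ) (es : ℕ → ℝ) (Fs D G : ℝ) (hD : 0 < D) (hG : 0 < G)
    (T : ℕ) (hT : 1 ≤ T)
    (he0 : ∀ s t, 0 ≤ e s t) (heD : ∀ s t, s ≤ t → t < T → e s t ≤ D ^ 2) (hes0 : ∀ t, 0 ≤ es t)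
    (hesD : ∀ t, t < T → es t ≤ D ^ 2) (hss : ∀ s, e s s = 0)
    (hb : ∀ s t, s ≤ t → t < T → 2 * (D / (G * √((t:ℝ) + 1))) * (a t - a s) ≤
      e s t - e s (t+1) + 2 * (D / (G * √((t:ℝ) + 1))) ^ 2 * G ^ 2)
    (hbs : ∀ t, t < T → 2 * (D / (G * √((t:ℝ) + 1))) * (a t - Fs) ≤
      es t - es (t+1) + 2 * (D / (G * √((t:ℝ) + 1))) ^ 2 * G ^ 2)
    (hlast : a T - a (T-1) ≤ 2 * (D * G / √T)) :
    a T - Fs ≤ 7 * (D * G * (1 + Real.log T) / √T) := by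
  have hTr : (0:ℝ) < T := by exact_mod_cast hT
  have hsT : 0 < √(T:ℝ) := Real.sqrt_pos.2 hTr
  have hsT2 : √(T:ℝ) ^ 2 = T := Real.sq_sqrt hTr.le
  set B := 5 / 2 * (D * G / √T) with hB
  have hB0 : 0 ≤ B := by positivity
  have key : ∀ s, s < T → ∑ t ∈ Finset.Ico s T, (a t - a s) ≤ ((T:ℝ) - s) * B := by
    intro s hs
    have h := seq_tele (fun t => a t - a s) (e s) D G hD hG s T hs.le (heD s)
      (fun t h1 h2 => hb s t h1 h2)
    have h1 : 0 ≤ G / (2 * D) * (√T * e s T) := by have := he0 s T; positivity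
    rw [hss] at h
    have hs2 : √(s:ℝ) ^ 2 = s := Real.sq_sqrt (by positivity)
    have hs0 : 0 ≤ √(s:ℝ) := by positivity
    have hsr : (s:ℝ) ≤ T := by exact_mod_cast hs.le
    have hst : √(s:ℝ) ≤ √T := Real.sqrt_le_sqrt hsr
    have h2 : √T - √s ≤ (T - s) / √(T:ℝ) := by
      rw [le_div_iff₀ hsT]; nlinarith
    have h3 := mul_le_mul_of_nonneg_left h2 (by positivity : 0 ≤ 5 / 2 * D * G)
    calc _ ≤ 5 / 2 * D * G * (√T - √s) := by nlinarith
      _ ≤ _ := h3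
      _ = _ := by rw [hB]; ring
  have keys : ∑ t ∈ Finset.Ico 0 T, (a t - Fs) ≤ T * B := by
    have h := seq_tele (fun t => a t - Fs) es D G hD hG 0 T (by omega) (fun t _ h => hesD t h)
      (fun t h1 h2 => hbs t h2)
    have h1 : 0 ≤ G / (2 * D) * (√T * es T) := by have := hes0 T; positivity
    simp only [Nat.cast_zero, Real.sqrt_zero, zero_mul, zero_sub, sub_zero] at h
    calc _ ≤ 5 / 2 * D * G * √T := by nlinarith
      _ = _ := by rw [hB]; nth_rw 2 [← hsT2]; field_simp
  -- averages of last k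
  have ind : ∀ k, k + 1 ≤ T → (∑ t ∈ Finset.Ico (T-(k+1)) T, a t) / ((k:ℝ)+1) ≥
      a (T-1) - B * (harmonic k : ℝ) := by
    intro k
    induction k with
    | zero =>
      intro h
      obtain ⟨N, rfl⟩ : ∃ N, T = N + 1 := ⟨T - 1, by omega⟩
      simp
    | succ k ih =>
      intro h
      have ih' := ih (by omega)
      have hk := key (T - (k+1+1)) (by omega)
      have e1 : ∑ t ∈ Finset.Ico (T-(k+1+1)) T, a t = a (T-(k+1+1)) + ∑ t ∈ Finset.Ico (T-(k+1)) T, a t := by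
        rw [Finset.sum_eq_sum_Ico_succ_bot (by omega)]
        congr 2; congr 1; omega
      rw [Finset.sum_sub_distrib] at hk
      simp only [Finset.sum_const, Nat.card_Ico, nsmul_eq_mul] at hk
      rw [Nat.sub_sub_self h, Nat.cast_sub h] at hk
      push_cast at hk ⊢
      rw [e1] at hk ⊢
      rw [harmonic_succ]
      push_cast
      set S := ∑ t ∈ Finset.Ico (T-(k+1)) T, a t
      set x := a (T-(k+1+1))
      have hk0 : (0:ℝ) ≤ k := by positivity
      have ih2 : (a (T-1) - B * (harmonic k : ℝ)) * (k+1) ≤ S := by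
        rwa [ge_iff_le, le_div_iff₀ (by positivity)] at ih'
      rw [ge_iff_le, le_div_iff₀ (by positivity)]
      -- x ≥ (x+S)/(k+2) - B
      have h6 : (x + S) ≤ (k+2) * (x + B) := by nlinarith
      have h7 : S ≤ (k+1) * x + (k+2) * B := by nlinarith
      have h8 : (a (T-1) - B * (harmonic k : ℝ)) * (k+1) * (k+2) ≤ S * (k+2) :=
        mul_le_mul_of_nonneg_right ih2 (by positivity)
      have h9 : ((a (T-1) - B * ((harmonic k : ℝ) + ((k:ℝ)+1)⁻¹)) * (k+1+1)) * (k+1) =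
        (a (T-1) - B * (harmonic k : ℝ)) * (k+1) * (k+2) - B * (k+2) := by
        field_simp; ring
      have h10 : ((a (T-1) - B * ((harmonic k : ℝ) + ((k:ℝ)+1)⁻¹)) * (k+1+1)) * (k+1) ≤ (x + S) * (k+1) := by
        rw [h9]; nlinarith
      exact le_of_mul_le_mul_right h10 (by positivity)
  have hfin := ind (T-1) (by omega)
  rw [Nat.sub_add_cancel hT, Nat.sub_self, Nat.cast_sub hT] at hfin
  rw [Finset.sum_sub_distrib] at keys
  simp only [Finset.sum_const, Nat.card_Ico, nsmul_eq_mul, Nat.sub_zero] at keys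
  have e3 : ((T:ℝ) - (1:ℕ) + 1) = T := by push_cast; ring
  rw [e3, ge_iff_le, le_div_iff₀ hTr] at hfin
  have h11 : a (T-1) - B * (harmonic (T-1) : ℝ) ≤ Fs + B := by
    refine le_of_mul_le_mul_right (a := (T:ℝ)) ?_ hTr
    linarith
  have h12 : (harmonic (T-1) : ℝ) ≤ 1 + Real.log T := by
    refine le_trans ?_ (harmonic_le_one_add_log T)
    obtain ⟨N, rfl⟩ : ∃ N, T = N + 1 := ⟨T - 1, by omega⟩
    rw [harmonic_succ]; push_cast
    have : (0:ℝ) ≤ ((N:ℝ)+1)⁻¹ := by positivity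
    linarith
  have h13 := mul_le_mul_of_nonneg_left h12 hB0
  have hl : 0 ≤ Real.log T := Real.log_nonneg (by exact_mod_cast hT)
  have e4 : D * G * (1 + Real.log T) / √T = (D * G / √T) * (1 + Real.log T) := by ring
  have hQ : 0 ≤ D * G / √(T:ℝ) := by positivity
  rw [e4]
  have hBl := mul_nonneg hQ hl
  rw [hB] at h13 h11
  nlinarith

section
variable {E : Type*} [NormedAddCommGroup E] [InnerProductSpace ℝ E]

lemma proj_var {C : Set E} (hC : Convex ℝ C) {proj : E → E}
    (hp : ∀ x, proj x ∈ C ∧ ∀ y ∈ C, ‖x - proj x‖ ≤ ‖x - y‖) (x z : E) (hz : z ∈ C) :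
    inner ℝ (x - proj x) (z - proj x) ≤ 0 := by
  refine (norm_eq_iInf_iff_real_inner_le_zero hC (hp x).1).1 ?_ z hz
  have : Nonempty C := ⟨⟨z, hz⟩⟩
  refine le_antisymm (le_ciInf fun y => (hp x).2 y y.2) ?_
  exact ciInf_le ⟨0, by rintro _ ⟨y, rfl⟩; exact norm_nonneg _⟩ (⟨proj x, (hp x).1⟩ : C)

lemma proj_lip {C : Set E} (hC : Convex ℝ C) {proj : E → E}
    (hp : ∀ x, proj x ∈ C ∧ ∀ y ∈ C, ‖x - proj x‖ ≤ ‖x - y‖) : LipschitzWith 1 proj := by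
  refine LipschitzWith.of_dist_le_mul fun x y => ?_
  have h1 := proj_var hC hp x (proj y) (hp y).1
  have h2 := proj_var hC hp y (proj x) (hp x).1
  rw [dist_eq_norm, dist_eq_norm, NNReal.coe_one, one_mul]
  have h3 : ‖proj x - proj y‖ ^ 2 ≤ inner ℝ (x - y) (proj x - proj y) := by
    rw [← real_inner_self_eq_norm_sq]
    simp only [inner_sub_left, inner_sub_right] at *
    linarith
  have h4 := real_inner_le_norm (x - y) (proj x - proj y)
  by_contra hc
  push Not at hc
  nlinarith [norm_nonneg (x - y), norm_nonneg (proj x - proj y)]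

variable [CompleteSpace E]

lemma grad_dir {C : Set E} (hC : Convex ℝ C) {L : E → ℝ} (hd : Differentiable ℝ L) {A : ℝ}
    (hL : ∀ x ∈ C, ∀ y ∈ C, |L x - L y| ≤ A * ‖x - y‖) {x u : E} (hx : x ∈ C) (hu : u ∈ C) :
    inner ℝ (gradient L x) (x - u) ≤ A * ‖x - u‖ := by
  have h1 : inner ℝ (gradient L x) (x - u) = - fderiv ℝ L x (u - x) := by
    rw [gradient, InnerProductSpace.toDual_symm_apply, ← map_neg, neg_sub]
  have h2 : HasDerivAt (fun s : ℝ => L (x + s • (u - x))) (fderiv ℝ L x (u - x)) 0 := by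
    have hf : HasFDerivAt L (fderiv ℝ L x) (x + (0:ℝ) • (u - x)) := by
      simpa using (hd x).hasFDerivAt
    have hg : HasDerivAt (fun s : ℝ => x + s • (u - x)) (u - x) 0 := by
      simpa using ((hasDerivAt_id (0:ℝ)).smul_const (u - x)).const_add x
    exact hf.comp_hasDerivAt (0:ℝ) hg
  rw [h1]
  have h3 := h2.tendsto_slope_zero_right
  simp only [zero_add, zero_smul, add_zero] at h3
  have h4 : - (A * ‖x - u‖) ≤ fderiv ℝ L x (u - x) := by
    refine ge_of_tendsto h3 ?_
    filter_upwards [Ioo_mem_nhdsGT (show (0:ℝ) < 1 by norm_num)] with s hs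
    have hm : x + s • (u - x) ∈ C := hC.add_smul_sub_mem hx hu ⟨hs.1.le, hs.2.le⟩
    have h5 := hL x hx _ hm
    have h6 : ‖x - (x + s • (u - x))‖ = s * ‖x - u‖ := by
      rw [sub_add_cancel_left, norm_neg, norm_smul, Real.norm_of_nonneg hs.1.le, norm_sub_rev]
    rw [h6] at h5
    have h7 := (abs_le.1 h5).2
    rw [smul_eq_mul, inv_mul_eq_div, le_div_iff₀ hs.1]
    linarith
  linarith

lemma grad_convex {L : E → ℝ} (hd : Differentiable ℝ L) (hc : ConvexOn ℝ Set.univ L) (x z : E) :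
    L x - L z ≤ inner ℝ (gradient L x) (x - z) := by
  have h1 : inner ℝ (gradient L x) (x - z) = - fderiv ℝ L x (z - x) := by
    rw [gradient, InnerProductSpace.toDual_symm_apply, ← map_neg, neg_sub]
  have h2 : HasDerivAt (fun s : ℝ => L (x + s • (z - x))) (fderiv ℝ L x (z - x)) 0 := by
    have hf : HasFDerivAt L (fderiv ℝ L x) (x + (0:ℝ) • (z - x)) := by
      simpa using (hd x).hasFDerivAt
    have hg : HasDerivAt (fun s : ℝ => x + s • (z - x)) (z - x) 0 := by
      simpa using ((hasDerivAt_id (0:ℝ)).smul_const (z - x)).const_add x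
    exact hf.comp_hasDerivAt (0:ℝ) hg
  rw [h1]
  have h3 := h2.tendsto_slope_zero_right
  simp only [zero_add, zero_smul, add_zero] at h3
  have h4 : fderiv ℝ L x (z - x) ≤ L z - L x := by
    refine le_of_tendsto h3 ?_
    filter_upwards [Ioo_mem_nhdsGT (show (0:ℝ) < 1 by norm_num)] with s hs
    have h5 := hc.2 (Set.mem_univ x) (Set.mem_univ z) (by linarith [hs.2] : 0 ≤ 1 - s) hs.1.le (by ring)
    have h6 : (1 - s) • x + s • z = x + s • (z - x) := by
      rw [sub_smul, smul_sub, one_smul]; abel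
    rw [h6] at h5
    simp only [smul_eq_mul] at h5
    rw [smul_eq_mul, inv_mul_eq_div, div_le_iff₀ hs.1]
    linarith
  linarith

lemma step_bound {C : Set E} (hC : Convex ℝ C) {proj : E → E}
    (hp : ∀ x, proj x ∈ C ∧ ∀ y ∈ C, ‖x - proj x‖ ≤ ‖x - y‖)
    {L : E → ℝ} (hd : Differentiable ℝ L) (hc : ConvexOn ℝ Set.univ L) {A w c η : ℝ}
    (hw : 0 ≤ w) (hη : 0 ≤ η) (hc0 : 0 ≤ c)
    (hL : ∀ x ∈ C, ∀ y ∈ C, |L x - L y| ≤ A * ‖x - y‖) {x z v : E} (hx : x ∈ C) (hz : z ∈ C) :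
    2 * η * (w * L x - w * L z) ≤ ‖x - z‖ ^ 2 -
      ‖proj (x - η • (w • gradient L x + c • v)) - z‖ ^ 2 - 2 * η * c * inner ℝ v (x - z)
      + 2 * η ^ 2 * ((w * A) ^ 2 + c ^ 2 * ‖v‖ ^ 2) := by
  set g := gradient L x
  set u := proj (x - η • (w • g + c • v)) with hu
  have huC : u ∈ C := (hp _).1
  have h1 := proj_var hC hp (x - η • (w • g + c • v)) z hz
  rw [← hu] at h1
  have h2 : w * inner ℝ g (x - u) ≤ w * (A * ‖x - u‖) :=
    mul_le_mul_of_nonneg_left (grad_dir hC hd hL hx huC) hw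
  have h3 : w * (L x - L z) ≤ w * inner ℝ g (x - z) :=
    mul_le_mul_of_nonneg_left (grad_convex hd hc x z) hw
  have h4 : c * inner ℝ v (x - u) ≤ c * (‖v‖ * ‖x - u‖) :=
    mul_le_mul_of_nonneg_left (real_inner_le_norm _ _) hc0
  have e1 : ‖x - z‖ ^ 2 = ‖x - u‖ ^ 2 + 2 * inner ℝ (x - u) (u - z) + ‖u - z‖ ^ 2 := by
    rw [← norm_add_sq_real]; simp
  have e2 : inner ℝ (x - η • (w • g + c • v) - u) (z - u) =
      - inner ℝ (x - u) (u - z) + η * (w * inner ℝ g (x - z) + c * inner ℝ v (x - z))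
       - η * (w * inner ℝ g (x - u) + c * inner ℝ v (x - u)) := by
    simp only [inner_sub_left, inner_sub_right, inner_add_left, real_inner_smul_left]
    ring
  rw [e2] at h1
  have h5 := mul_le_mul_of_nonneg_left (add_le_add h2 h4) hη
  have h6 := mul_le_mul_of_nonneg_left h3 hη
  nlinarith [sq_nonneg (‖x - u‖ - η * (w * A + c * ‖v‖)), mul_nonneg (sq_nonneg η) (sq_nonneg (w * A - c * ‖v‖))]

lemma last_bound {C : Set E} (hC : Convex ℝ C) {proj : E → E}
    (hp : ∀ x, proj x ∈ C ∧ ∀ y ∈ C, ‖x - proj x‖ ≤ ‖x - y‖)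
    {L : E → ℝ} (hd : Differentiable ℝ L) {A w c η : ℝ}
    (hw : 0 ≤ w) (hη : 0 ≤ η) (hc0 : 0 ≤ c) (hA : 0 ≤ A)
    (hL : ∀ x ∈ C, ∀ y ∈ C, |L x - L y| ≤ A * ‖x - y‖) {x v : E} (hx : x ∈ C) :
    w * L (proj (x - η • (w • gradient L x + c • v))) - w * L x ≤
      2 * η * ((w * A) ^ 2 + c ^ 2 * ‖v‖ ^ 2) := by
  set g := gradient L x
  set u := proj (x - η • (w • g + c • v)) with hu
  have huC : u ∈ C := (hp _).1
  have h1 := proj_var hC hp (x - η • (w • g + c • v)) x hx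
  rw [← hu] at h1
  have h2 : w * inner ℝ g (x - u) ≤ w * (A * ‖x - u‖) :=
    mul_le_mul_of_nonneg_left (grad_dir hC hd hL hx huC) hw
  have h4 : c * inner ℝ v (x - u) ≤ c * (‖v‖ * ‖x - u‖) :=
    mul_le_mul_of_nonneg_left (real_inner_le_norm _ _) hc0
  have e2 : inner ℝ (x - η • (w • g + c • v) - u) (x - u) =
      ‖x - u‖ ^ 2 - η * (w * inner ℝ g (x - u) + c * inner ℝ v (x - u)) := by
    rw [← real_inner_self_eq_norm_sq]
    simp only [inner_sub_left, inner_sub_right, inner_add_left, real_inner_smul_left]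
    ring
  rw [e2] at h1
  have h5 := mul_le_mul_of_nonneg_left (add_le_add h2 h4) hη
  have h6 : ‖x - u‖ ≤ η * (w * A + c * ‖v‖) := by
    by_contra hcon
    push Not at hcon
    have : 0 ≤ η * (w * A + c * ‖v‖) := by positivity
    nlinarith
  have h7 := mul_le_mul_of_nonneg_left (abs_le.1 (hL u huC x hx)).2 hw
  rw [norm_sub_rev] at h7
  have h8 := mul_le_mul_of_nonneg_left h6 (by positivity : 0 ≤ w * A)
  have h9 : 0 ≤ η * (w * A - c * ‖v‖) ^ 2 := by positivity
  have h10 : 0 ≤ η * (c * ‖v‖) ^ 2 := by positivity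
  nlinarith

end

section prob
variable {d : ℕ} {Ω : Type} [MeasureSpace Ω] [IsProbabilityMeasure (ℙ : Measure Ω)]

/-- sigma-algebra of the noise strictly before time t -/
@[reducible] def pastSigma {T : ℕ} (X : Fin T → Ω → EuclideanSpace ℝ (Fin d)) (t : ℕ) : MeasurableSpace Ω :=
  ⨆ p ∈ {p : Fin T × Fin d | p.1.1 < t},
    MeasurableSpace.comap (fun ω => X p.1 ω p.2) (inferInstance : MeasurableSpace ℝ)

lemma pastSigma_mono {T : ℕ} (X : Fin T → Ω → EuclideanSpace ℝ (Fin d)) {s t : ℕ} (h : s ≤ t) :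
    pastSigma X s ≤ pastSigma X t :=
  biSup_mono fun _ hp => lt_of_lt_of_le hp h

lemma pastSigma_le {T : ℕ} (X : Fin T → Ω → EuclideanSpace ℝ (Fin d))
    (hX : ∀ t, Measurable (X t)) (t : ℕ) : pastSigma X t ≤ MeasureSpace.toMeasurableSpace := by
  refine iSup₂_le fun p _ => Measurable.comap_le ?_
  have := hX p.1
  fun_prop

lemma pastSigma_meas {T : ℕ} (X : Fin T → Ω → EuclideanSpace ℝ (Fin d)) (t : ℕ) (ht : t < T) :
    Measurable[pastSigma X (t+1)] (X ⟨t, ht⟩) := by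
  have h : ∀ k, Measurable[pastSigma X (t+1)] (fun ω => X ⟨t, ht⟩ ω k) := by
    intro k
    refine Measurable.mono (comap_measurable _) ?_ le_rfl
    exact le_iSup₂_of_le (f := fun (p : Fin T × Fin d) (_ : p ∈ {p : Fin T × Fin d | p.1.1 < t+1}) =>
      MeasurableSpace.comap (fun ω => X p.1 ω p.2) (inferInstance : MeasurableSpace ℝ))
      (⟨t, ht⟩, k) (by simp) le_rfl
  have h2 : Measurable[pastSigma X (t+1)] (fun ω k => X ⟨t, ht⟩ ω k) :=
    @measurable_pi_lambda _ _ _ (pastSigma X (t+1)) _ _ h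
  exact (MeasurableEquiv.toLp 2 (Fin d → ℝ)).measurable.comp h2

lemma past_indep {T : ℕ} (X : Fin T → Ω → EuclideanSpace ℝ (Fin d))
    (hX : ∀ t, Measurable (X t))
    (hind : iIndepFun (fun p : Fin T × Fin d => fun ω => X p.1 ω p.2) ℙ)
    (t : ℕ) (ht : t < T) (k : Fin d) (Y : Ω → ℝ) (hY : Measurable[pastSigma X t] Y) :
    IndepFun (fun ω => X ⟨t, ht⟩ ω k) Y ℙ := by
  have hi : iIndep (fun p : Fin T × Fin d => MeasurableSpace.comap (fun ω => X p.1 ω p.2)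
      (inferInstance : MeasurableSpace ℝ)) ℙ := hind
  have h := indep_iSup_of_disjoint (S := {((⟨t, ht⟩, k) : Fin T × Fin d)})
    (T := {p : Fin T × Fin d | p.1.1 < t}) (fun p => Measurable.comap_le (by
      have := hX p.1
      fun_prop)) hi (by simp)
  rw [IndepFun_iff_Indep]
  refine indep_of_indep_of_le_left (indep_of_indep_of_le_right h hY.comap_le) ?_
  simp

lemma gauss_facts {x : Ω → ℝ} (hx : Measurable x) (hg : Measure.map x ℙ = gaussianReal 0 1) :
    Integrable x ℙ ∧ ∫ ω, x ω = 0 ∧ Integrable (fun ω => x ω ^ 2) ℙ ∧ ∫ ω, x ω ^ 2 = 1 := by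
  have hm : MemLp x 2 ℙ := by
    have := memLp_id_gaussianReal' (μ := 0) (v := 1) 2 (by simp)
    rw [← hg, memLp_map_measure_iff (by fun_prop) hx.aemeasurable] at this
    exact this
  have h0 : ∫ ω, x ω = 0 := by
    have := integral_id_gaussianReal (μ := 0) (v := 1)
    rwa [← hg, integral_map hx.aemeasurable (by fun_prop)] at this
  refine ⟨hm.integrable (by norm_num), h0, hm.integrable_sq, ?_⟩
  have := variance_fun_id_gaussianReal (μ := 0) (v := 1)
  rw [variance_eq_integral (by fun_prop), integral_id_gaussianReal, ← hg,
    integral_map hx.aemeasurable (by fun_prop)] at this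
  simpa using this

lemma noise_sq {x : Ω → EuclideanSpace ℝ (Fin d)} (hx : Measurable x)
    (hg : ∀ k, Measure.map (fun ω => x ω k) ℙ = gaussianReal 0 1) :
    Integrable (fun ω => ‖x ω‖ ^ 2) ℙ ∧ ∫ ω, ‖x ω‖ ^ 2 = d := by
  have hf := fun k => gauss_facts (x := fun ω => x ω k) (by fun_prop) (hg k)
  simp only [EuclideanSpace.real_norm_sq_eq]
  refine ⟨integrable_finsetSum _ fun k _ => (hf k).2.2.1, ?_⟩
  rw [integral_finsetSum _ fun k _ => (hf k).2.2.1]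
  simp [(hf _).2.2.2]

lemma noise_inner {T : ℕ} (X : Fin T → Ω → EuclideanSpace ℝ (Fin d))
    (hX : ∀ t, Measurable (X t))
    (hind : iIndepFun (fun p : Fin T × Fin d => fun ω => X p.1 ω p.2) ℙ)
    (hg : ∀ t k, Measure.map (fun ω => X t ω k) ℙ = gaussianReal 0 1)
    (t : ℕ) (ht : t < T) (Y : Ω → EuclideanSpace ℝ (Fin d)) (hY : Measurable[pastSigma X t] Y)
    (R : ℝ) (hR : ∀ ω, ‖Y ω‖ ≤ R) :
    Integrable (fun ω => inner ℝ (X ⟨t, ht⟩ ω) (Y ω)) ℙ ∧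
      ∫ ω, inner ℝ (X ⟨t, ht⟩ ω) (Y ω) = 0 := by
  have hYm : Measurable Y := hY.mono (pastSigma_le X hX t) le_rfl
  have hf := fun k => gauss_facts (x := fun ω => X ⟨t, ht⟩ ω k)
    (by have := hX ⟨t, ht⟩; fun_prop) (hg ⟨t, ht⟩ k)
  have hYk : ∀ k, Measurable[pastSigma X t] (fun ω => Y ω k) := fun k =>
    (show Measurable (fun y : EuclideanSpace ℝ (Fin d) => y k) by fun_prop).comp hY
  have hYi : ∀ k, Integrable (fun ω => Y ω k) ℙ := fun k =>
    Integrable.of_bound (by fun_prop) R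
      (Filter.Eventually.of_forall fun ω => (PiLp.norm_apply_le (Y ω) k).trans (hR ω))
  have hI := fun k => past_indep X hX hind t ht k _ (hYk k)
  have hint : ∀ k, Integrable (fun ω => X ⟨t, ht⟩ ω k * Y ω k) ℙ := fun k =>
    (hI k).integrable_mul (hf k).1 (hYi k)
  have he : ∀ ω, inner ℝ (X ⟨t, ht⟩ ω) (Y ω) = ∑ k, X ⟨t, ht⟩ ω k * Y ω k := by
    intro ω
    simp [PiLp.inner_apply, mul_comm]
  simp only [he]
  refine ⟨integrable_finsetSum _ fun k _ => hint k, ?_⟩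
  rw [integral_finsetSum _ fun k _ => hint k]
  refine Finset.sum_eq_zero fun k _ => ?_
  rw [(hI k).integral_fun_mul_eq_mul_integral (hf k).1.1 (hYi k).1, (hf k).2.1, zero_mul]

lemma task_bound (C : Set (EuclideanSpace ℝ (Fin d))) (hCc : IsCompact C) (hC : Convex ℝ C)
    (D : ℝ) (hD : 0 < D) (hdiam : Metric.diam C = D)
    (L : EuclideanSpace ℝ (Fin d) → ℝ) (hLc : ConvexOn ℝ Set.univ L) (hLd : Differentiable ℝ L)
    (A : ℝ) (hA : 0 ≤ A) (hL : ∀ x ∈ C, ∀ y ∈ C, |L x - L y| ≤ A * ‖x - y‖)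
    (zs : EuclideanSpace ℝ (Fin d)) (hzs : zs ∈ C) (w c G : ℝ) (hw : 0 < w) (hc : 0 ≤ c)
    (hG : 0 < G) (hGe : G ^ 2 = (w * A) ^ 2 + c ^ 2 * d) (T : ℕ) (hT : 1 ≤ T)
    (X : Fin T → Ω → EuclideanSpace ℝ (Fin d)) (hX : ∀ t, Measurable (X t))
    (hind : iIndepFun (fun p : Fin T × Fin d => fun ω => X p.1 ω p.2) ℙ)
    (hg : ∀ t k, Measure.map (fun ω => X t ω k) ℙ = gaussianReal 0 1)
    (proj : EuclideanSpace ℝ (Fin d) → EuclideanSpace ℝ (Fin d))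
    (hp : ∀ x, proj x ∈ C ∧ ∀ y ∈ C, ‖x - proj x‖ ≤ ‖x - y‖)
    (θ : ℕ → Ω → EuclideanSpace ℝ (Fin d)) (h0 : ∃ θ0 ∈ C, θ 0 = fun _ => θ0)
    (hstep : ∀ t : ℕ, (ht : t < T) → θ (t + 1) = fun ω => proj (θ t ω -
      (D / (G * √((t:ℝ) + 1))) • (w • gradient L (θ t ω) + c • X ⟨t, ht⟩ ω))) :
    w * (∫ ω, L (θ T ω)) - w * L zs ≤ 7 * (D * G * (1 + Real.log T) / √T) := by
  have hmem : ∀ t, t ≤ T → ∀ ω, θ t ω ∈ C := by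
    intro t ht ω
    rcases t with _ | t
    · obtain ⟨z, hz, he⟩ := h0
      rw [he]; exact hz
    · rw [hstep t (by omega)]; exact (hp _).1
  have hgm : Measurable (gradient L) :=
    (InnerProductSpace.toDual ℝ (EuclideanSpace ℝ (Fin d))).symm.continuous.measurable.comp
      (measurable_fderiv ℝ L)
  have hpm : Measurable proj := (proj_lip hC hp).continuous.measurable
  have hmeas : ∀ t, t ≤ T → Measurable[pastSigma X t] (θ t) := by
    intro t
    induction t with
    | zero =>
      intro _
      obtain ⟨z, hz, he⟩ := h0
      rw [he]; exact measurable_const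
    | succ t ih =>
      intro ht
      have h1 : Measurable[pastSigma X (t+1)] (θ t) :=
        (ih (by omega)).mono (pastSigma_mono X (by omega)) le_rfl
      have h2 := pastSigma_meas X t (by omega)
      have h3 : Measurable (fun q : EuclideanSpace ℝ (Fin d) × EuclideanSpace ℝ (Fin d) =>
        proj (q.1 - (D / (G * √((t:ℝ) + 1))) • (w • gradient L q.1 + c • q.2))) := by
        fun_prop
      rw [hstep t (by omega)]
      exact h3.comp (h1.prodMk h2)
  have hmeas' : ∀ t, t ≤ T → Measurable (θ t) := fun t ht =>
    (hmeas t ht).mono (pastSigma_le X hX t) le_rfl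
  have hdist : ∀ x ∈ C, ∀ y ∈ C, ‖x - y‖ ≤ D := by
    intro x hx y hy
    rw [← dist_eq_norm, ← hdiam]
    exact Metric.dist_le_diam_of_mem hCc.isBounded hx hy
  have hLm : Measurable L := hLd.continuous.measurable
  have hLi : ∀ t, t ≤ T → Integrable (fun ω => L (θ t ω)) ℙ := by
    intro t ht
    refine Integrable.of_bound (hLm.comp (hmeas' t ht)).aestronglyMeasurable (|L zs| + A * D)
      (Filter.Eventually.of_forall fun ω => ?_)
    have h1 := hL _ (hmem t ht ω) _ hzs
    have h2 := mul_le_mul_of_nonneg_left (hdist _ (hmem t ht ω) _ hzs) hA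
    have h3 := abs_sub_abs_le_abs_sub (L (θ t ω)) (L zs)
    rw [Real.norm_eq_abs]
    linarith
  -- square distance integrability
  have hsq : ∀ t, t ≤ T → ∀ Z : Ω → EuclideanSpace ℝ (Fin d), Measurable Z → (∀ ω, Z ω ∈ C) →
      Integrable (fun ω => ‖θ t ω - Z ω‖ ^ 2) ℙ ∧ ∫ ω, ‖θ t ω - Z ω‖ ^ 2 ≤ D ^ 2 := by
    intro t ht Z hZ hZC
    have hb : ∀ ω, ‖θ t ω - Z ω‖ ^ 2 ≤ D ^ 2 := fun ω =>
      pow_le_pow_left₀ (norm_nonneg _) (hdist _ (hmem t ht ω) _ (hZC ω)) 2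
    have hm := hmeas' t ht
    have hi : Integrable (fun ω => ‖θ t ω - Z ω‖ ^ 2) ℙ := by
      refine Integrable.of_bound (by fun_prop) (D ^ 2) (Filter.Eventually.of_forall fun ω => ?_)
      rw [Real.norm_of_nonneg (by positivity)]; exact hb ω
    refine ⟨hi, ?_⟩
    calc _ ≤ ∫ ω : Ω, D ^ 2 := integral_mono hi (integrable_const _) hb
      _ = _ := by simp
  have main : ∀ t, t < T → ∀ Z : Ω → EuclideanSpace ℝ (Fin d), Measurable[pastSigma X t] Z →
      (∀ ω, Z ω ∈ C) → Integrable (fun ω => L (Z ω)) ℙ →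
      2 * (D / (G * √((t:ℝ) + 1))) * (w * (∫ ω, L (θ t ω)) - w * (∫ ω, L (Z ω))) ≤
        (∫ ω, ‖θ t ω - Z ω‖ ^ 2) - (∫ ω, ‖θ (t+1) ω - Z ω‖ ^ 2)
          + 2 * (D / (G * √((t:ℝ) + 1))) ^ 2 * G ^ 2 := by
    intro t ht Z hZ hZC hZi
    set η := D / (G * √((t:ℝ) + 1)) with hη
    have hη0 : 0 ≤ η := by positivity
    have hZm : Measurable Z := hZ.mono (pastSigma_le X hX t) le_rfl
    obtain ⟨i1, -⟩ := hsq t ht.le Z hZm hZC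
    obtain ⟨i2, -⟩ := hsq (t+1) ht Z hZm hZC
    obtain ⟨i3, e3⟩ := noise_inner X hX hind hg t ht (fun ω => θ t ω - Z ω)
      ((show Measurable (fun q : EuclideanSpace ℝ (Fin d) × EuclideanSpace ℝ (Fin d) => q.1 - q.2)
        by fun_prop).comp ((hmeas t ht.le).prodMk hZ)) D
      (fun ω => hdist _ (hmem t ht.le ω) _ (hZC ω))
    obtain ⟨i4, e4⟩ := noise_sq (hX ⟨t, ht⟩) (hg ⟨t, ht⟩)
    have i5 := hLi t ht.le
    have hpt : ∀ ω, 2 * η * (w * L (θ t ω) - w * L (Z ω)) ≤ ‖θ t ω - Z ω‖ ^ 2 -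
        ‖θ (t+1) ω - Z ω‖ ^ 2 - 2 * η * c * inner ℝ (X ⟨t, ht⟩ ω) (θ t ω - Z ω)
        + 2 * η ^ 2 * ((w * A) ^ 2 + c ^ 2 * ‖X ⟨t, ht⟩ ω‖ ^ 2) := by
      intro ω
      rw [hstep t ht]
      exact step_bound hC hp hLd hLc hw.le hη0 hc hL (hmem t ht.le ω) (hZC ω)
    have hlhs : Integrable (fun ω => 2 * η * (w * L (θ t ω) - w * L (Z ω))) ℙ :=
      ((i5.const_mul w).sub (hZi.const_mul w)).const_mul _
    have hr1 : Integrable (fun ω => ‖θ t ω - Z ω‖ ^ 2 - ‖θ (t+1) ω - Z ω‖ ^ 2) ℙ := i1.sub i2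
    have hr2 : Integrable (fun ω => 2 * η * c * inner ℝ (X ⟨t, ht⟩ ω) (θ t ω - Z ω)) ℙ :=
      i3.const_mul _
    have hr3a : Integrable (fun ω => c ^ 2 * ‖X ⟨t, ht⟩ ω‖ ^ 2) ℙ := i4.const_mul _
    have hr3b : Integrable (fun ω => (w * A) ^ 2 + c ^ 2 * ‖X ⟨t, ht⟩ ω‖ ^ 2) ℙ :=
      (integrable_const _).add hr3a
    have hr3 : Integrable (fun ω => 2 * η ^ 2 * ((w * A) ^ 2 + c ^ 2 * ‖X ⟨t, ht⟩ ω‖ ^ 2)) ℙ :=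
      hr3b.const_mul _
    have hr12 : Integrable (fun ω => ‖θ t ω - Z ω‖ ^ 2 - ‖θ (t+1) ω - Z ω‖ ^ 2 -
        2 * η * c * inner ℝ (X ⟨t, ht⟩ ω) (θ t ω - Z ω)) ℙ := hr1.sub hr2
    have h := integral_mono hlhs (hr12.add hr3) hpt
    simp only [Pi.add_apply] at h
    rw [integral_const_mul, integral_sub (i5.const_mul w) (hZi.const_mul w), integral_const_mul,
      integral_const_mul, integral_add hr12 hr3] at h
    rw [integral_sub hr1 hr2, integral_sub i1 i2,
      integral_const_mul, integral_const_mul, integral_add (integrable_const _) hr3a,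
      integral_const_mul, e3, e4] at h
    simp only [integral_const, probReal_univ, one_smul] at h
    rw [← hGe] at h
    linarith
  have hTp : T - 1 < T := by omega
  have hlast : w * (∫ ω, L (θ T ω)) - w * (∫ ω, L (θ (T-1) ω)) ≤ 2 * (D * G / √T) := by
    obtain ⟨N, hN⟩ : ∃ N, T = N + 1 := ⟨T - 1, by omega⟩
    have hNT : N < T := by omega
    have hT1 : T - 1 = N := by omega
    rw [hT1]
    set η := D / (G * √((N:ℝ) + 1)) with hη
    have hη0 : 0 ≤ η := by positivity
    have hTN : (T:ℝ) = N + 1 := by rw [hN]; push_cast; ring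
    obtain ⟨i4, e4⟩ := noise_sq (hX ⟨N, hNT⟩) (hg ⟨N, hNT⟩)
    have hpt : ∀ ω, w * L (θ T ω) - w * L (θ N ω) ≤
        2 * η * ((w * A) ^ 2 + c ^ 2 * ‖X ⟨N, hNT⟩ ω‖ ^ 2) := by
      intro ω
      have e : θ T = θ (N+1) := congrArg θ hN
      rw [e, hstep N hNT]
      exact last_bound hC hp hLd hw.le hη0 hc hA hL (hmem N hNT.le ω)
    have i5 := hLi T le_rfl
    have i6 := hLi N hNT.le
    have hr3a : Integrable (fun ω => c ^ 2 * ‖X ⟨N, hNT⟩ ω‖ ^ 2) ℙ := i4.const_mul _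
    have hr3b : Integrable (fun ω => (w * A) ^ 2 + c ^ 2 * ‖X ⟨N, hNT⟩ ω‖ ^ 2) ℙ :=
      (integrable_const _).add hr3a
    have h := integral_mono ((i5.const_mul w).sub (i6.const_mul w)) (hr3b.const_mul (2 * η)) hpt
    simp only [Pi.sub_apply] at h
    rw [integral_sub (i5.const_mul w) (i6.const_mul w), integral_const_mul,
      integral_const_mul, integral_const_mul, integral_add (integrable_const _) hr3a,
      integral_const_mul, e4] at h
    simp only [integral_const, probReal_univ, one_smul] at h
    rw [← hGe] at h
    refine h.trans (le_of_eq ?_)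
    rw [hη, hTN]
    field_simp
  refine last_iterate (fun t => w * ∫ ω, L (θ t ω)) (fun s t => ∫ ω, ‖θ t ω - θ s ω‖ ^ 2)
    (fun t => ∫ ω, ‖θ t ω - zs‖ ^ 2) (w * L zs) D G hD hG T hT
    (fun s t => integral_nonneg fun ω => by positivity)
    (fun s t hst ht => (hsq t ht.le _ (hmeas' s (by omega)) (hmem s (by omega))).2)
    (fun t => integral_nonneg fun ω => by positivity)
    (fun t ht => (hsq t ht.le (fun _ => zs) measurable_const (fun _ => hzs)).2)
    (fun s => by simp)
    (fun s t hst ht => main t ht (θ s)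
      ((hmeas s (by omega)).mono (pastSigma_mono X hst) le_rfl) (hmem s (by omega))
      (hLi s (by omega)))
    (fun t ht => by
      have := main t ht (fun _ => zs) measurable_const (fun _ => hzs) (integrable_const _)
      simpa using this)
    hlast

end prob

/-- Utility of task-weighted noisy gradient descent, Lipschitz convex case (Theorem 4(a)):
there is a universal constant `K > 0` such that, with per-example losses `ℓ i j` convex,
differentiable and `Γ`-Lipschitz on a compact convex `C` of diameter `D`, task objectives
`L i = ∑ j, ℓ i j` minimized over `C` at `θ* i`, positive task weights `w i`,
`T = ⌈(2/d) (∑ i, nᵢ²)/(∑ i, 1/wᵢ²)⌉`, independent standard Gaussian noise vectors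
`ξ i t` (i.i.d. `N(0,1)` coordinates), and the noisy projected GD iterates with step sizes
`η i t = D/(Γ √(wᵢ² nᵢ² + T d/2) √t)`, the total excess empirical risk of the final
iterates is at most `K D Γ (1 + log T) √(m d ∑ i, 1/wᵢ²)`. -/
theorem stmt8 :
    ∃ K : ℝ, 0 < K ∧
      ∀ (d m : ℕ), 1 ≤ d → 1 ≤ m →
      ∀ nn : Fin m → ℕ, (∀ i, 1 ≤ nn i) →
      ∀ Γ : ℝ, 0 < Γ →
      ∀ C : Set (EuclideanSpace ℝ (Fin d)), C.Nonempty → IsCompact C → Convex ℝ C →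
      ∀ D : ℝ, 0 < D → Metric.diam C = D →
      ∀ ℓ : (i : Fin m) → Fin (nn i) → EuclideanSpace ℝ (Fin d) → ℝ,
        (∀ i j, ConvexOn ℝ Set.univ (ℓ i j)) →
        (∀ i j, Differentiable ℝ (ℓ i j)) →
        (∀ i j, ∀ x ∈ C, ∀ y ∈ C, |ℓ i j x - ℓ i j y| ≤ Γ * ‖x - y‖) →
      ∀ θstar : Fin m → EuclideanSpace ℝ (Fin d),
        (∀ i, θstar i ∈ C) → (∀ i, ∀ y ∈ C, (∑ j, ℓ i j (θstar i)) ≤ ∑ j, ℓ i j y) →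
      ∀ w : Fin m → ℝ, (∀ i, 0 < w i) →
      ∀ T : ℕ, T = ⌈(2 / (d : ℝ)) * (∑ i, (nn i : ℝ) ^ 2) / (∑ i, 1 / w i ^ 2)⌉₊ →
      ∀ (Ω : Type) (_ : MeasureSpace Ω), IsProbabilityMeasure (ℙ : Measure Ω) →
      ∀ ξ : Fin m → Fin T → Ω → EuclideanSpace ℝ (Fin d),
        (∀ i t, Measurable (ξ i t)) →
        iIndepFun (m := fun _ => (inferInstance : MeasurableSpace ℝ))
          (fun p : (Fin m × Fin T) × Fin d => fun ω => ξ p.1.1 p.1.2 ω p.2) ℙ →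
        (∀ i t k, Measure.map (fun ω => ξ i t ω k) ℙ = gaussianReal 0 1) →
      ∀ proj : EuclideanSpace ℝ (Fin d) → EuclideanSpace ℝ (Fin d),
        (∀ x, proj x ∈ C ∧ ∀ y ∈ C, ‖x - proj x‖ ≤ ‖x - y‖) →
      ∀ θ : Fin m → ℕ → Ω → EuclideanSpace ℝ (Fin d),
        (∀ i, ∃ θ0 ∈ C, θ i 0 = fun _ => θ0) →
        (∀ i, ∀ t : ℕ, (ht : t < T) →
          θ i (t + 1) = fun ω =>
            proj (θ i t ω -
              (D / (Γ * Real.sqrt (w i ^ 2 * (nn i : ℝ) ^ 2 + T * d / 2) *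
                  Real.sqrt (t + 1))) •
                (w i • gradient (fun x => ∑ j, ℓ i j x) (θ i t ω) +
                  (Γ * Real.sqrt (T / 2)) • ξ i ⟨t, ht⟩ ω))) →
      (∑ i, ∫ ω, (∑ j, ℓ i j (θ i T ω)) ∂(ℙ : Measure Ω)) - (∑ i, ∑ j, ℓ i j (θstar i)) ≤
        K * D * Γ * (1 + Real.log T) * Real.sqrt (m * d * ∑ i, 1 / w i ^ 2) := by
  refine ⟨7, by norm_num, ?_⟩
  intro d m hd hm nn hnn Γ hΓ C hCne hCc hC D hD hdiam ℓ hconv hdiff hlip θstar hθs hmin w hw T hTdef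
    Ω _ hprob ξ hξm hind hgauss proj hproj θ h0 hstep
  have hdr : (0:ℝ) < d := by exact_mod_cast hd
  have hmn : Nonempty (Fin m) := ⟨⟨0, by omega⟩⟩
  set S := ∑ i, 1 / w i ^ 2 with hS
  set N2 := ∑ i, (nn i : ℝ) ^ 2 with hN2
  have hS0 : 0 < S := Finset.sum_pos (fun i _ => by have := hw i; positivity) Finset.univ_nonempty
  have hN0 : 0 < N2 := Finset.sum_pos (fun i _ => by
    have : (0:ℝ) < nn i := by exact_mod_cast hnn i
    positivity) Finset.univ_nonempty
  have hT1 : 1 ≤ T := by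
    rw [hTdef]; exact Nat.ceil_pos.2 (by positivity)
  have hTr : (0:ℝ) < T := by exact_mod_cast hT1
  have hTge : 2 / (d:ℝ) * N2 / S ≤ T := by rw [hTdef]; exact Nat.le_ceil _
  have hNT : N2 / T ≤ d * S / 2 := by
    rw [div_le_iff₀ hTr]
    rw [div_le_iff₀ hS0] at hTge
    have := mul_le_mul_of_nonneg_left hTge (by positivity : 0 ≤ (d:ℝ) / 2)
    have e : (d:ℝ) / 2 * (2 / d * N2) = N2 := by field_simp
    rw [e] at this
    linarith
  have hlog : 0 ≤ Real.log T := Real.log_nonneg (by exact_mod_cast hT1)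
  have per : ∀ i, (∫ ω, (∑ j, ℓ i j (θ i T ω)) ∂(ℙ : Measure Ω)) - ∑ j, ℓ i j (θstar i) ≤
      7 * D * Γ * (1 + Real.log T) * √((nn i : ℝ) ^ 2 / T + d / 2 * (1 / w i ^ 2)) := by
    intro i
    have hwi := hw i
    have hni : (0:ℝ) < nn i := by exact_mod_cast hnn i
    set Q := √(w i ^ 2 * (nn i : ℝ) ^ 2 + T * d / 2) with hQ
    have hQ0 : 0 < Q := Real.sqrt_pos.2 (by positivity)
    have hQ2 : Q ^ 2 = w i ^ 2 * (nn i : ℝ) ^ 2 + T * d / 2 := Real.sq_sqrt (by positivity)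
    have hc2 : √((T:ℝ) / 2) ^ 2 = T / 2 := Real.sq_sqrt (by positivity)
    have hb := task_bound C hCc hC D hD hdiam (fun x => ∑ j, ℓ i j x)
      (by
        refine ⟨convex_univ, fun x _ y _ a b ha hb hab => ?_⟩
        simp only [smul_eq_mul, Finset.mul_sum, ← Finset.sum_add_distrib]
        exact Finset.sum_le_sum fun j _ =>
          (hconv i j).2 (Set.mem_univ x) (Set.mem_univ y) ha hb hab)
      (by
        have := hdiff i
        fun_prop)
      (nn i * Γ) (by positivity)
      (by
        intro x hx y hy
        rw [← Finset.sum_sub_distrib]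
        refine (Finset.abs_sum_le_sum_abs _ _).trans ?_
        refine (Finset.sum_le_sum fun j _ => hlip i j x hx y hy).trans ?_
        simp [mul_assoc])
      (θstar i) (hθs i) (w i) (Γ * √((T:ℝ) / 2)) (Γ * Q) hwi (by positivity) (by positivity)
      (by rw [mul_pow, hQ2, mul_pow Γ, hc2]; ring) T hT1 (fun t => ξ i t) (hξm i)
      (by
        have := hind.precomp (g := fun p : Fin T × Fin d => ((i, p.1), p.2)) (by
          rintro ⟨a, b⟩ ⟨a', b'⟩ h
          simpa using h)
        exact this)
      (hgauss i) proj hproj (θ i) (h0 i) (hstep i)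
    have e : 7 * (D * (Γ * Q) * (1 + Real.log T) / √T) =
        w i * (7 * D * Γ * (1 + Real.log T) * √((nn i : ℝ) ^ 2 / T + d / 2 * (1 / w i ^ 2))) := by
      have h1 : √((nn i : ℝ) ^ 2 / T + d / 2 * (1 / w i ^ 2)) = Q / (w i * √T) := by
        have h2 : √T ^ 2 = (T:ℝ) := Real.sq_sqrt hTr.le
        rw [Real.sqrt_eq_iff_eq_sq (by positivity) (by positivity), div_pow, hQ2, mul_pow, h2]
        field_simp
      rw [h1]
      field_simp
    rw [e, ← mul_sub] at hb
    exact le_of_mul_le_mul_left hb hwi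
  rw [← Finset.sum_sub_distrib]
  refine (Finset.sum_le_sum fun i _ => per i).trans ?_
  rw [← Finset.mul_sum]
  refine mul_le_mul_of_nonneg_left ?_ (by positivity)
  refine Real.le_sqrt_of_sq_le ?_
  refine (sq_sum_le_card_mul_sum_sq).trans ?_
  have h3 : ∀ i, √((nn i : ℝ) ^ 2 / T + d / 2 * (1 / w i ^ 2)) ^ 2 =
      (nn i : ℝ) ^ 2 / T + d / 2 * (1 / w i ^ 2) := fun i => Real.sq_sqrt (by positivity)
  simp only [h3, Finset.sum_add_distrib, ← Finset.mul_sum, ← Finset.sum_div, Finset.card_univ,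
    Fintype.card_fin]
  rw [← hS, ← hN2, mul_assoc (m:ℝ)]
  refine mul_le_mul_of_nonneg_left ?_ (by positivity)
  linarith
end

section
/- There exists a universal constant K > 0 with the following property (utility of task-weighted noisy gradient descent in the strongly convex case, Theorem 4(b)). Let d, m ≥ 1 and n₁,…,n_m ≥ 1 be integers, Γ > 0, λ > 0, and let C ⊆ ℝ^d be a nonempty compact convex set. For each i ∈ {1,…,m} and j ∈ {1,…,n_i}, let ℓ_{ij} : ℝ^d → ℝ be differentiable, λ-strongly convex, and Γ-Lipschitz on C; set L_i = ∑_{j=1}^{n_i} ℓ_{ij} and let θ*_i be the minimizer of L_i over C. Let ω₁,…,ω_m > 0 be task weights and set T = ⌈(2/d)·(∑_{i=1}^m n_i)/(∑_{i=1}^m 1/(ω_i² n_i))⌉. On a probability space, let (ξ_i⁽ᵗ⁾)_{i ∈ [m], t ∈ [T]} be independent random vectors in ℝ^d, each with the standard Gaussian law (d independent N(0,1) coordinates). For each i, let θ_i⁽⁰⁾ ∈ C be deterministic and define θ_i⁽ᵗ⁾ = Π_C( θ_i⁽ᵗ⁻¹⁾ − η_i⁽ᵗ⁾( ω_i ∇L_i(θ_i⁽ᵗ⁻¹⁾)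 + Γ√(T/2)·ξ_i⁽ᵗ⁾ ) ) with step sizes η_i⁽ᵗ⁾ = 1/(ω_i n_i λ t). Then ∑_{i=1}^m E[L_i(θ_i⁽ᵀ⁾)] − ∑_{i=1}^m L_i(θ*_i) ≤ K · (Γ²/λ) · d · (1 + log T) · ∑_{i=1}^m 1/(ω_i² n_i). -/
open MeasureTheory ProbabilityTheory

lemma aux_last_iterate (a : ℕ → ℝ) (A c : ℝ) (hA : 0 ≤ A) (T : ℕ) (hT : 1 ≤ T)
    (h : ∀ s ≤ T, ∑ t ∈ Finset.Ico s (T + 1), (a t - a s)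
      ≤ A * ∑ t ∈ Finset.Ico s (T + 1), 1 / ((t : ℝ) + 1))
    (h0 : ∑ t ∈ Finset.Ico 0 (T + 1), (a t - c)
      ≤ A * ∑ t ∈ Finset.Ico 0 (T + 1), 1 / ((t : ℝ) + 1)) :
    a T - c ≤ 4 * A * (1 + Real.log T) / T := by
  have hTr : (1 : ℝ) ≤ T := by exact_mod_cast hT
  set H : ℝ := ∑ t ∈ Finset.range T, 1 / ((t : ℝ) + 1) with hH
  have hHlog : H ≤ 1 + Real.log T := by
    have := harmonic_le_one_add_log T
    simpa [harmonic, hH] using this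
  have hHn : 1 ≤ H := by
    have : ∑ t ∈ Finset.range 1, 1 / ((t : ℝ) + 1) ≤ H :=
      Finset.sum_le_sum_of_subset_of_nonneg (Finset.range_subset_range.2 hT) (fun i _ _ => by positivity)
    simpa using this
  set V : ℕ → ℝ := fun s => ∑ t ∈ Finset.Ico s (T + 1), a t with hV
  have key : ∀ s ≤ T, V s / ((T : ℝ) - s + 1) ≤ V 0 / (T + 1)
      + A * ∑ t ∈ Finset.range s, 1 / (((T : ℝ) - t) * (t + 1)) := by
    intro s
    induction s with
    | zero => intro _; simp
    | succ s ih =>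
      intro hs
      have ih := ih (by omega)
      have h1 := h s (by omega)
      have hsr : (s : ℝ) + 1 ≤ T := by exact_mod_cast hs
      have h2 : ∑ t ∈ Finset.Ico s (T + 1), 1 / ((t : ℝ) + 1) ≤ ((T : ℝ) - s + 1) / (s + 1) := by
        calc _ ≤ ∑ t ∈ Finset.Ico s (T + 1), 1 / ((s : ℝ) + 1) := by
              apply Finset.sum_le_sum
              intro t ht
              have : (s : ℝ) ≤ t := by exact_mod_cast (Finset.mem_Ico.1 ht).1
              gcongr
          _ = _ := by
              rw [Finset.sum_const, Nat.card_Ico, nsmul_eq_mul, Nat.cast_sub (by omega)]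
              push_cast; ring
      have h3 : ∑ t ∈ Finset.Ico s (T + 1), (a t - a s) = V s - ((T : ℝ) - s + 1) * a s := by
        rw [Finset.sum_sub_distrib, Finset.sum_const, Nat.card_Ico, nsmul_eq_mul,
          Nat.cast_sub (by omega)]
        push_cast; simp only [hV]; ring
      have h4 : V s = a s + V (s + 1) := by
        simp only [hV]; rw [Finset.sum_eq_sum_Ico_succ_bot (by omega)]
      have h5 : V s - ((T : ℝ) - s + 1) * a s ≤ A * (((T : ℝ) - s + 1) / (s + 1)) := by
        rw [← h3]; exact h1.trans (mul_le_mul_of_nonneg_left h2 hA)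
      rw [Finset.sum_range_succ, mul_add]
      have hr : (0 : ℝ) < T - s := by linarith
      have h6 : V (s + 1) / ((T : ℝ) - (s + 1 : ℕ) + 1) - V s / ((T : ℝ) - s + 1)
          ≤ A * (1 / (((T : ℝ) - s) * (s + 1))) := by
        have e1 : V (s + 1) / ((T : ℝ) - (s + 1 : ℕ) + 1) - V s / ((T : ℝ) - s + 1)
          = (V s - ((T : ℝ) - s + 1) * a s) / ((T - s) * (T - s + 1)) := by
          have : ((T : ℝ) - (s + 1 : ℕ) + 1) = T - s := by push_cast; ring
          rw [this]
          have h7 : (T : ℝ) - s ≠ 0 := hr.ne'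
          have h8 : (T : ℝ) - s + 1 ≠ 0 := by positivity
          rw [h4]
          field_simp
          ring
        have e2 : A * (1 / (((T : ℝ) - s) * (s + 1)))
          = (A * (((T : ℝ) - s + 1) / (s + 1))) / ((T - s) * (T - s + 1)) := by
          have h7 : (T : ℝ) - s ≠ 0 := hr.ne'
          have h8 : (T : ℝ) - s + 1 ≠ 0 := by positivity
          field_simp
        rw [e1, e2]
        gcongr
      linarith
  have hk := key T le_rfl
  have hVT : V T = a T := by simp [hV]
  have hsum : ∑ t ∈ Finset.range T, 1 / (((T : ℝ) - t) * (t + 1)) = 2 * H / (T + 1) := by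
    have e : ∑ t ∈ Finset.range T, 1 / ((T : ℝ) - t) = H := by
      rw [hH, ← Finset.sum_range_reflect]
      apply Finset.sum_congr rfl
      intro t ht
      have := Finset.mem_range.1 ht
      rw [Nat.cast_sub (by omega), Nat.cast_sub (by omega)]
      push_cast; congr 1; ring
    have : ∀ t ∈ Finset.range T, 1 / (((T : ℝ) - t) * (t + 1))
        = (1 / ((T : ℝ) - t) + 1 / ((t : ℝ) + 1)) / (T + 1) := by
      intro t ht
      have h1 : (t : ℝ) < T := by exact_mod_cast Finset.mem_range.1 ht
      have h7 : (T : ℝ) - t ≠ 0 := by linarith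
      field_simp
      ring
    rw [Finset.sum_congr rfl this, ← Finset.sum_div, Finset.sum_add_distrib, e, ← hH]
    ring
  rw [hVT, hsum] at hk
  have hV0 : V 0 - (T + 1) * c ≤ A * (H + 1) := by
    have e1 : ∑ t ∈ Finset.Ico 0 (T + 1), (a t - c) = V 0 - (T + 1) * c := by
      rw [Finset.sum_sub_distrib, Finset.sum_const, Nat.card_Ico, nsmul_eq_mul]
      push_cast; simp only [hV]
    rw [← e1]
    refine h0.trans (mul_le_mul_of_nonneg_left ?_ hA)
    rw [← Finset.range_eq_Ico, Finset.sum_range_succ]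
    have : 1 / ((T : ℝ) + 1) ≤ 1 := by rw [div_le_one (by linarith)]; linarith
    linarith
  have e3 : (T : ℝ) - T + 1 = 1 := by ring
  rw [e3, div_one] at hk
  have h9 : V 0 / ((T : ℝ) + 1) ≤ c + A * (H + 1) / (T + 1) := by
    rw [div_le_iff₀ (by linarith)]
    have : (c + A * (H + 1) / ((T : ℝ) + 1)) * (T + 1) = c * (T + 1) + A * (H + 1) := by
      field_simp
    linarith
  calc a T - c ≤ A * (3 * H + 1) / (T + 1) := by
        have : A * (3 * H + 1) / ((T : ℝ) + 1)
          = A * (H + 1) / (T + 1) + A * (2 * H / (T + 1)) := by ring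
        linarith
    _ ≤ A * (4 * (1 + Real.log T)) / T := by
        gcongr <;> linarith
    _ = _ := by ring

section
variable {E : Type*} [NormedAddCommGroup E] [InnerProductSpace ℝ E]

lemma aux_proj_inner {C : Set E} (hC : Convex ℝ C) {proj : E → E}
    (hp : ∀ x, proj x ∈ C ∧ ∀ y ∈ C, ‖x - proj x‖ ≤ ‖x - y‖) (z y : E) (hy : y ∈ C) :
    inner ℝ (z - proj z) (y - proj z) ≤ 0 := by
  have : Nonempty C := ⟨⟨y, hy⟩⟩
  refine (norm_eq_iInf_iff_real_inner_le_zero hC (hp z).1).1 ?_ y hy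
  apply le_antisymm
  · exact le_ciInf fun w => (hp z).2 w w.2
  · exact ciInf_le (f := fun w : C => ‖z - w‖) ⟨0, by rintro _ ⟨w, rfl⟩; positivity⟩
      ⟨proj z, (hp z).1⟩

lemma aux_proj_cont {C : Set E} (hC : Convex ℝ C) {proj : E → E}
    (hp : ∀ x, proj x ∈ C ∧ ∀ y ∈ C, ‖x - proj x‖ ≤ ‖x - y‖) : Continuous proj := by
  have : LipschitzWith 1 proj := by
    apply LipschitzWith.of_dist_le_mul
    intro x y
    rw [dist_eq_norm, dist_eq_norm]
    have h1 := aux_proj_inner hC hp x (proj y) (hp y).1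
    have h2 := aux_proj_inner hC hp y (proj x) (hp x).1
    have h3 : ‖proj x - proj y‖ ^ 2 ≤ inner ℝ (x - y) (proj x - proj y) := by
      rw [← real_inner_self_eq_norm_sq]
      simp only [inner_sub_left, inner_sub_right] at *
      linarith
    have h4 := real_inner_le_norm (x - y) (proj x - proj y)
    by_cases h5 : ‖proj x - proj y‖ = 0
    · rw [h5]; positivity
    · have : 0 < ‖proj x - proj y‖ := lt_of_le_of_ne (norm_nonneg _) (Ne.symm h5)
      simp only [NNReal.coe_one, one_mul]
      nlinarith
  exact this.continuous

lemma aux_step {C : Set E} (hC : Convex ℝ C) {proj : E → E}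
    (hp : ∀ x, proj x ∈ C ∧ ∀ y ∈ C, ‖x - proj x‖ ≤ ‖x - y‖)
    (L : E → ℝ) (g : E → E) (a B : ℝ) (ha : 0 < a) 
    (hsc : ∀ x y, L x + inner ℝ (g x) (y - x) + a / 2 * ‖y - x‖ ^ 2 ≤ L y)
    (hg : ∀ x ∈ C, ∀ y ∈ C, inner ℝ (g x) (x - y) ≤ B * ‖x - y‖)
    (x y n : E) (hx : x ∈ C) (hy : y ∈ C) (t : ℕ) :
    L x - L y ≤ a * t / 2 * ‖x - y‖ ^ 2
      - a * (t + 1 : ℕ) / 2 * ‖proj (x - (1 / (a * (t + 1))) • (g x + n)) - y‖ ^ 2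
      + (B + ‖n‖) ^ 2 / (2 * a) * (1 / (t + 1)) + inner ℝ n (y - x) := by
  set q := 1 / (a * ((t : ℝ) + 1)) with hq
  have hq0 : 0 < q := by positivity
  set z := x - q • (g x + n) with hz
  set p := proj z with hpz
  have h1 : inner ℝ (z - p) (y - p) ≤ 0 := aux_proj_inner hC hp z y hy
  have h2 := hg x hx p (hp z).1
  have h3 := real_inner_le_norm n (x - p)
  have h4 := hsc x y
  have e1 : inner ℝ (z - p) (y - p) = 1 / 2 * (‖x - p‖ ^ 2 + ‖p - y‖ ^ 2 - ‖x - y‖ ^ 2)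
      - q * inner ℝ (g x) (y - x) - q * inner ℝ (g x) (x - p)
      - q * inner ℝ n (y - x) - q * inner ℝ n (x - p) := by
    rw [hz]
    simp only [← real_inner_self_eq_norm_sq]
    simp only [inner_sub_left, inner_sub_right, inner_add_left, inner_smul_left]
    simp only [real_inner_comm x y, real_inner_comm x p, real_inner_comm y p, conj_trivial]
    ring
  have e2 : ‖y - x‖ = ‖x - y‖ := norm_sub_rev _ _
  rw [e2] at h4
  set u := ‖x - p‖
  set D := ‖x - y‖
  set D' := ‖p - y‖
  have hqi : a * (t + 1 : ℕ) = 1 / q := by rw [hq]; push_cast; field_simp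
  have h6 : q * (B * u + ‖n‖ * u) ≤ 1 / 2 * u ^ 2 + q ^ 2 * (B + ‖n‖) ^ 2 / 2 := by
    nlinarith [sq_nonneg (u - q * (B + ‖n‖))]
  have h7 : q * (L x - L y) ≤ D ^ 2 / 2 - D' ^ 2 / 2 + q * inner ℝ n (y - x)
      + q ^ 2 * (B + ‖n‖) ^ 2 / 2 - q * a / 2 * D ^ 2 := by
    nlinarith
  have e3 : a * t / 2 * D ^ 2 - a * (t + 1 : ℕ) / 2 * D' ^ 2
      + (B + ‖n‖) ^ 2 / (2 * a) * (1 / (t + 1)) + inner ℝ n (y - x)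
      = (1 / q) * (D ^ 2 / 2 - D' ^ 2 / 2 + q * inner ℝ n (y - x)
      + q ^ 2 * (B + ‖n‖) ^ 2 / 2 - q * a / 2 * D ^ 2) := by
    rw [hq]; push_cast; field_simp; ring
  rw [e3, one_div, inv_mul_eq_div, le_div_iff₀ hq0]
  linarith

lemma aux_last {C : Set E}
    (L : E → ℝ) (g : E → E) (a B : ℝ) (ha : 0 < a)
    (hsc : ∀ x y, L x + inner ℝ (g x) (y - x) + a / 2 * ‖y - x‖ ^ 2 ≤ L y)
    (hg : ∀ x ∈ C, ∀ y ∈ C, inner ℝ (g x) (x - y) ≤ B * ‖x - y‖)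
    (x y : E) (hx : x ∈ C) (hy : y ∈ C) (t : ℕ) :
    L x - L y ≤ a * t / 2 * ‖x - y‖ ^ 2 + B ^ 2 / (2 * a) * (1 / (t + 1)) := by
  have h1 := hsc x y
  have h2 := hg x hx y hy
  have e2 : ‖y - x‖ = ‖x - y‖ := norm_sub_rev _ _
  have e3 : inner ℝ (g x) (y - x) = - inner ℝ (g x) (x - y) := by
    rw [← inner_neg_right, neg_sub]
  rw [e2, e3] at h1
  set D := ‖x - y‖
  have h5 : B * D ≤ a * (t + 1) / 2 * D ^ 2 + B ^ 2 / (2 * a) * (1 / (t + 1)) := by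
    have : a * (t + 1) / 2 * D ^ 2 + B ^ 2 / (2 * a) * (1 / (t + 1)) - B * D
      = (a * (t + 1) * D - B) ^ 2 / (2 * a * (t + 1)) := by field_simp; ring
    have : 0 ≤ (a * (t + 1) * D - B) ^ 2 / (2 * a * (t + 1)) := by positivity
    linarith
  linarith

variable [CompleteSpace E]

lemma aux_line {f : E → ℝ} (hf : Differentiable ℝ f) (x y : E) :
    HasDerivAt (fun s : ℝ => f (x + s • (y - x))) (inner ℝ (gradient f x) (y - x)) 0 := by
  have h1 : HasFDerivAt f (fderiv ℝ f x) (x + (0 : ℝ) • (y - x)) := by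
    simpa using (hf x).hasFDerivAt
  have h2 : HasDerivAt (fun s : ℝ => x + s • (y - x)) (y - x) 0 := by
    simpa using ((hasDerivAt_id (0 : ℝ)).smul_const (y - x)).const_add x
  have h3 := h1.comp_hasDerivAt (0 : ℝ) h2
  have h4 : inner ℝ (gradient f x) (y - x) = fderiv ℝ f x (y - x) := by
    simp [gradient]
  rw [h4]; exact h3

lemma aux_sc {f : E → ℝ} (hf : Differentiable ℝ f) (a : ℝ)
    (hc : ConvexOn ℝ Set.univ (fun x => f x - a / 2 * ‖x‖ ^ 2)) (x y : E) :
    f x + inner ℝ (gradient f x) (y - x) + a / 2 * ‖y - x‖ ^ 2 ≤ f y := by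
  have h1 := aux_line hf x y
  have e : ∀ s : ℝ, ‖x + s • (y - x)‖ ^ 2
      = ‖x‖ ^ 2 + 2 * s * inner ℝ x (y - x) + s ^ 2 * ‖y - x‖ ^ 2 := by
    intro s
    rw [norm_add_sq_real, norm_smul, inner_smul_right, mul_pow, Real.norm_eq_abs, sq_abs]
    ring
  have h2 : HasDerivAt (fun s : ℝ => ‖x + s • (y - x)‖ ^ 2) (2 * inner ℝ x (y - x)) 0 := by
    simp_rw [e]
    have := (((hasDerivAt_id (0 : ℝ)).const_mul 2).mul_const (inner ℝ x (y - x))).const_add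
      (‖x‖ ^ 2)
    have h' := this.add ((hasDerivAt_pow 2 (0 : ℝ)).mul_const (‖y - x‖ ^ 2))
    convert! h' using 1
    simp
  have h3 := h1.sub (h2.const_mul (a / 2))
  have hl : ConvexOn ℝ Set.univ
      (fun s : ℝ => f (x + s • (y - x)) - a / 2 * ‖x + s • (y - x)‖ ^ 2) := by
    have := hc.comp_affineMap (AffineMap.lineMap x y)
    rw [Set.preimage_univ] at this
    have e' : (fun s : ℝ => f (x + s • (y - x)) - a / 2 * ‖x + s • (y - x)‖ ^ 2)
        = (fun x => f x - a / 2 * ‖x‖ ^ 2) ∘ (AffineMap.lineMap x y : ℝ →ᵃ[ℝ] E) := by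
      ext s
      simp [AffineMap.lineMap_apply, add_comm]
    rw [e']
    exact this
  have h4 := hl.le_slope_of_hasDerivAt (Set.mem_univ (0 : ℝ)) (Set.mem_univ (1 : ℝ)) one_pos h3
  simp only [slope_def_field, one_smul, zero_smul, add_zero, sub_zero, div_one,
    add_sub_cancel] at h4
  have e1 := e 1
  simp only [one_smul, add_sub_cancel] at e1
  rw [e1] at h4
  linarith

lemma aux_lip {f : E → ℝ} (hf : Differentiable ℝ f) {C : Set E} (hC : Convex ℝ C) (B : ℝ)
    (hL : ∀ x ∈ C, ∀ y ∈ C, |f x - f y| ≤ B * ‖x - y‖) (x : E) (hx : x ∈ C) (y : E) (hy : y ∈ C) :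
    inner ℝ (gradient f x) (x - y) ≤ B * ‖x - y‖ := by
  have h1 := (aux_line hf x y).tendsto_slope_zero_right
  have h2 : - (B * ‖x - y‖) ≤ inner ℝ (gradient f x) (y - x) := by
    apply ge_of_tendsto h1
    have : Set.Ioo (0 : ℝ) 1 ∈ nhdsWithin (0 : ℝ) (Set.Ioi 0) := Ioo_mem_nhdsGT one_pos
    filter_upwards [this] with s hs
    have hm : x + s • (y - x) ∈ C := hC.add_smul_sub_mem hx hy ⟨hs.1.le, hs.2.le⟩
    have h3 := (abs_le.1 (hL _ hx _ hm)).2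
    have e : ‖x - (x + s • (y - x))‖ = s * ‖x - y‖ := by
      rw [sub_add_cancel_left, norm_neg, norm_smul, Real.norm_of_nonneg hs.1.le, norm_sub_rev]
    rw [e] at h3
    simp only [zero_add, zero_smul, add_zero, smul_eq_mul]
    rw [inv_mul_eq_div, le_div_iff₀ hs.1]
    linarith
  have : inner ℝ (gradient f x) (x - y) = - inner ℝ (gradient f x) (y - x) := by
    rw [← inner_neg_right, neg_sub]
  linarith

end

lemma aux_core {Ω : Type*} [MeasurableSpace Ω] (P : Measure Ω) [IsProbabilityMeasure P]
    {E : Type*} [NormedAddCommGroup E] [InnerProductSpace ℝ E] [MeasurableSpace E] [BorelSpace E]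
    {C : Set E} (hCc : IsCompact C) (hC : Convex ℝ C) {proj : E → E}
    (hp : ∀ x, proj x ∈ C ∧ ∀ y ∈ C, ‖x - proj x‖ ≤ ‖x - y‖)
    (L : E → ℝ) (hLc : Continuous L) (g : E → E) (a B D : ℝ) (ha : 0 < a) (hD : 0 ≤ D)
    (hsc : ∀ x y, L x + inner ℝ (g x) (y - x) + a / 2 * ‖y - x‖ ^ 2 ≤ L y)
    (hg : ∀ x ∈ C, ∀ y ∈ C, inner ℝ (g x) (x - y) ≤ B * ‖x - y‖)
    (T : ℕ) (hT : 1 ≤ T) (x ν : ℕ → Ω → E)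
    (hx : ∀ t ≤ T, Measurable (x t)) (hxC : ∀ t ≤ T, ∀ ω, x t ω ∈ C)
    (hrec : ∀ t < T, ∀ ω,
      x (t + 1) ω = proj (x t ω - (1 / (a * ((t : ℝ) + 1))) • (g (x t ω) + ν t ω)))
    (hν : ∀ t < T, Integrable (fun ω => ‖ν t ω‖ ^ 2) P ∧ ∫ ω, ‖ν t ω‖ ^ 2 ∂P ≤ D)
    (hort : ∀ t < T, ∀ Y : Ω → E, ((∃ c ∈ C, Y = fun _ => c) ∨ ∃ s ≤ t, Y = x s) →
      Integrable (fun ω => inner ℝ (ν t ω) (Y ω - x t ω)) P ∧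
        ∫ ω, inner ℝ (ν t ω) (Y ω - x t ω) ∂P = 0)
    (c : E) (hc : c ∈ C) :
    ∫ ω, L (x T ω) ∂P - L c ≤ 4 * ((B ^ 2 + D) / a) * (1 + Real.log T) / T := by
  obtain ⟨R, hR⟩ := hCc.exists_bound_of_continuousOn hLc.continuousOn
  have hint : ∀ Y : Ω → E, Measurable Y → (∀ ω, Y ω ∈ C) → Integrable (fun ω => L (Y ω)) P := by
    intro Y hY hYC
    exact Integrable.of_bound (hLc.measurable.comp hY).aestronglyMeasurable R
      (Filter.Eventually.of_forall fun ω => hR _ (hYC ω))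
  have hpt : ∀ (s u : ℕ), s ≤ u → u ≤ T → ∀ ω, ∀ y ∈ C,
      ∑ t ∈ Finset.Ico s u, (L (x t ω) - L y) ≤ a * s / 2 * ‖x s ω - y‖ ^ 2
        - a * u / 2 * ‖x u ω - y‖ ^ 2 + ∑ t ∈ Finset.Ico s u,
          ((B ^ 2 + ‖ν t ω‖ ^ 2) / a * (1 / ((t : ℝ) + 1)) + inner ℝ (ν t ω) (y - x t ω)) := by
    intro s u hsu
    induction u, hsu using Nat.le_induction with
    | base => intro _ ω y hy; simp
    | succ u hsu ih =>
      intro hu ω y hy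
      have ih := ih (by omega) ω y hy
      rw [Finset.sum_Ico_succ_top hsu, Finset.sum_Ico_succ_top hsu]
      have h1 := aux_step hC hp L g a B ha hsc hg (x u ω) y (ν u ω) (hxC u (by omega) ω) hy u
      rw [← hrec u (by omega) ω] at h1
      have h2 : (B + ‖ν u ω‖) ^ 2 / (2 * a) * (1 / ((u : ℝ) + 1))
          ≤ (B ^ 2 + ‖ν u ω‖ ^ 2) / a * (1 / ((u : ℝ) + 1)) := by
        have : (B ^ 2 + ‖ν u ω‖ ^ 2) / a = (2 * (B ^ 2 + ‖ν u ω‖ ^ 2)) / (2 * a) := by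
          field_simp
        rw [this]
        gcongr
        nlinarith [sq_nonneg (B - ‖ν u ω‖)]
      linarith
  have hsumm : ∀ s ≤ T, ∀ Y : Ω → E, Measurable Y → (∀ ω, Y ω ∈ C) →
      (∀ ω, (s : ℝ) * ‖x s ω - Y ω‖ ^ 2 = 0) →
      (∀ t < T, s ≤ t → Integrable (fun ω => inner ℝ (ν t ω) (Y ω - x t ω)) P ∧
        ∫ ω, inner ℝ (ν t ω) (Y ω - x t ω) ∂P = 0) →
      ∑ t ∈ Finset.Ico s (T + 1), (∫ ω, L (x t ω) ∂P - ∫ ω, L (Y ω) ∂P)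
        ≤ (B ^ 2 + D) / a * ∑ t ∈ Finset.Ico s (T + 1), 1 / ((t : ℝ) + 1) := by
    intro s hs Y hY hYC hz ho
    have hi1 : ∀ t ∈ Finset.Ico s (T + 1), Integrable (fun ω => L (x t ω) - L (Y ω)) P := by
      intro t ht
      have := (Finset.mem_Ico.1 ht).2
      exact (hint _ (hx t (by omega)) (hxC t (by omega))).sub (hint _ hY hYC)
    have hi2a : ∀ t ∈ Finset.Ico s T, Integrable
        (fun ω => (B ^ 2 + ‖ν t ω‖ ^ 2) / a * (1 / ((t : ℝ) + 1))) P := by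
      intro t ht
      obtain ⟨h1, h2⟩ := Finset.mem_Ico.1 ht
      exact ((((integrable_const _).add (hν t h2).1).div_const a).mul_const _)
    have hi2 : ∀ t ∈ Finset.Ico s T, Integrable
        (fun ω => (B ^ 2 + ‖ν t ω‖ ^ 2) / a * (1 / ((t : ℝ) + 1))
          + inner ℝ (ν t ω) (Y ω - x t ω)) P := by
      intro t ht
      obtain ⟨h1, h2⟩ := Finset.mem_Ico.1 ht
      exact (hi2a t ht).add (ho t h2 h1).1
    have e1 : ∑ t ∈ Finset.Ico s (T + 1), (∫ ω, L (x t ω) ∂P - ∫ ω, L (Y ω) ∂P)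
        = ∫ ω, ∑ t ∈ Finset.Ico s (T + 1), (L (x t ω) - L (Y ω)) ∂P := by
      rw [integral_finsetSum _ hi1]
      apply Finset.sum_congr rfl
      intro t ht
      have := (Finset.mem_Ico.1 ht).2
      rw [integral_sub (hint _ (hx t (by omega)) (hxC t (by omega))) (hint _ hY hYC)]
    rw [e1]
    have hi3 := integrable_finsetSum _ hi2
    calc _ ≤ ∫ ω, (∑ t ∈ Finset.Ico s T, ((B ^ 2 + ‖ν t ω‖ ^ 2) / a * (1 / ((t : ℝ) + 1))
          + inner ℝ (ν t ω) (Y ω - x t ω)) + B ^ 2 / (2 * a) * (1 / ((T : ℝ) + 1))) ∂P := by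
          apply integral_mono (integrable_finsetSum _ hi1) (hi3.add (integrable_const _))
          intro ω
          have h1 := hpt s T hs le_rfl ω (Y ω) (hYC ω)
          have h2 := aux_last L g a B ha hsc hg (x T ω) (Y ω) (hxC T le_rfl ω) (hYC ω) T
          have h3 : a * s / 2 * ‖x s ω - Y ω‖ ^ 2 = 0 := by
            have : a * s / 2 * ‖x s ω - Y ω‖ ^ 2 = a / 2 * (s * ‖x s ω - Y ω‖ ^ 2) := by ring
            rw [this, hz, mul_zero]
          simp only [Pi.add_apply]
          rw [Finset.sum_Ico_succ_top hs]
          linarith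
      _ = ∑ t ∈ Finset.Ico s T, (B ^ 2 + ∫ ω, ‖ν t ω‖ ^ 2 ∂P) / a * (1 / ((t : ℝ) + 1))
          + B ^ 2 / (2 * a) * (1 / ((T : ℝ) + 1)) := by
          rw [integral_add hi3 (integrable_const _), integral_finsetSum _ hi2]
          simp only [integral_const, probReal_univ, one_smul]
          congr 1
          apply Finset.sum_congr rfl
          intro t ht
          obtain ⟨h1, h2⟩ := Finset.mem_Ico.1 ht
          rw [integral_add (hi2a t ht) (ho t h2 h1).1, (ho t h2 h1).2, integral_mul_const,
            integral_div, integral_add (integrable_const _) (hν t h2).1]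
          simp
      _ ≤ ∑ t ∈ Finset.Ico s T, (B ^ 2 + D) / a * (1 / ((t : ℝ) + 1))
          + (B ^ 2 + D) / a * (1 / ((T : ℝ) + 1)) := by
          apply add_le_add
          · apply Finset.sum_le_sum
            intro t ht
            obtain ⟨h1, h2⟩ := Finset.mem_Ico.1 ht
            have := (hν t h2).2
            gcongr
          · have : B ^ 2 / (2 * a) ≤ (B ^ 2 + D) / a := by
              gcongr
              · linarith
              · linarith
            gcongr
      _ = _ := by
          rw [← Finset.mul_sum, ← mul_add, ← Finset.sum_Ico_succ_top hs]
  apply aux_last_iterate (fun t => ∫ ω, L (x t ω) ∂P) _ _ (by positivity) T hT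
  · intro s hs
    exact hsumm s hs (x s) (hx s hs) (hxC s hs) (by intro ω; simp)
      (fun t ht hst => hort t ht (x s) (Or.inr ⟨s, hst, rfl⟩))
  · have := hsumm 0 (by omega) (fun _ => c) measurable_const (fun _ => hc) (by intro ω; simp)
      (fun t ht hst => hort t ht (fun _ => c) (Or.inl ⟨c, hc, rfl⟩))
    simpa using this

lemma aux_gauss {Ω : Type*} [MeasurableSpace Ω] (P : Measure Ω) [IsProbabilityMeasure P]
    (X : Ω → ℝ) (hX : Measurable X) (hg : Measure.map X P = gaussianReal 0 1) :
    MemLp X 2 P ∧ ∫ ω, X ω ∂P = 0 ∧ ∫ ω, X ω ^ 2 ∂P = 1 := by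
  have h1 : MemLp X 2 P := by
    have : MemLp id 2 (Measure.map X P) := by
      rw [hg]; exact memLp_id_gaussianReal 2
    exact (memLp_map_measure_iff (by fun_prop) hX.aemeasurable).1 this
  have h2 : ∫ ω, X ω ∂P = 0 := by
    have : ∫ y, y ∂(Measure.map X P) = ∫ ω, X ω ∂P :=
      integral_map hX.aemeasurable (by fun_prop)
    rw [← this, hg, integral_id_gaussianReal]
  refine ⟨h1, h2, ?_⟩
  have h3 : ∫ y, y ^ 2 ∂(Measure.map X P) = ∫ ω, X ω ^ 2 ∂P :=
    integral_map hX.aemeasurable (by fun_prop)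
  rw [← h3, hg]
  have h4 := variance_fun_id_gaussianReal (μ := 0) (v := 1)
  rw [variance_eq_integral (by fun_prop)] at h4
  simpa using h4

lemma aux_orth {Ω : Type*} (m1 : MeasurableSpace Ω) {mΩ : MeasurableSpace Ω} (P : Measure Ω)
    [IsProbabilityMeasure P] {d : ℕ} (hm1 : m1 ≤ mΩ) (ξ X : Ω → EuclideanSpace ℝ (Fin d))
    (hξ : Measurable ξ) (hX : Measurable[m1] X) (R : ℝ) (hR : ∀ ω, ‖X ω‖ ≤ R)
    (hind : ∀ k, Indep (MeasurableSpace.comap (fun ω => ξ ω k) inferInstance) m1 P)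
    (hg : ∀ k, Measure.map (fun ω => ξ ω k) P = gaussianReal 0 1) :
    Integrable (fun ω => inner ℝ (ξ ω) (X ω)) P ∧ ∫ ω, inner ℝ (ξ ω) (X ω) ∂P = 0 := by
  have hXk : ∀ k, Measurable[m1] (fun ω => X ω k) := by
    intro k
    have h : Measurable (fun v : EuclideanSpace ℝ (Fin d) => v k) := by fun_prop
    exact h.comp hX
  have hξk : ∀ k, Measurable (fun ω => ξ ω k) := by
    intro k; fun_prop
  have hXi : ∀ k, Integrable (fun ω => X ω k) P := by
    intro k
    refine Integrable.of_bound ((hXk k).mono hm1 le_rfl).aestronglyMeasurable R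
      (Filter.Eventually.of_forall fun ω => (PiLp.norm_apply_le (X ω) k).trans (hR ω))
  have hindk : ∀ k, IndepFun (fun ω => ξ ω k) (fun ω => X ω k) P := by
    intro k
    rw [IndepFun_iff_Indep]
    exact indep_of_indep_of_le_right (hind k) (hXk k).comap_le
  have hξi : ∀ k, Integrable (fun ω => ξ ω k) P := fun k =>
    (aux_gauss P _ (hξk k) (hg k)).1.integrable (by norm_num)
  have hi : ∀ k, Integrable (fun ω => ξ ω k * X ω k) P := fun k =>
    (hindk k).integrable_mul (hξi k) (hXi k)
  have e : ∀ ω, inner ℝ (ξ ω) (X ω) = ∑ k, ξ ω k * X ω k := by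
    intro ω; rw [PiLp.inner_apply]; simp [mul_comm]
  simp_rw [e]
  refine ⟨integrable_finsetSum _ fun k _ => hi k, ?_⟩
  rw [integral_finsetSum _ fun k _ => hi k]
  apply Finset.sum_eq_zero
  intro k _
  have := (hindk k).integral_fun_mul_eq_mul_integral (hξi k).aestronglyMeasurable
    (hXi k).aestronglyMeasurable
  rw [this, (aux_gauss P _ (hξk k) (hg k)).2.1, zero_mul]

lemma aux_normsq {Ω : Type*} {mΩ : MeasurableSpace Ω} (P : Measure Ω) [IsProbabilityMeasure P]
    {d : ℕ} (ξ : Ω → EuclideanSpace ℝ (Fin d))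
    (hξ : Measurable ξ) 
    (hg : ∀ k, Measure.map (fun ω => ξ ω k) P = gaussianReal 0 1) :
    Integrable (fun ω => ‖ξ ω‖ ^ 2) P ∧ ∫ ω, ‖ξ ω‖ ^ 2 ∂P = d := by
  have hξk : ∀ k, Measurable (fun ω => ξ ω k) := by
    intro k; fun_prop
  have hi : ∀ k, Integrable (fun ω => ξ ω k ^ 2) P := fun k =>
    (aux_gauss P _ (hξk k) (hg k)).1.integrable_sq
  simp_rw [EuclideanSpace.real_norm_sq_eq]
  refine ⟨integrable_finsetSum _ fun k _ => hi k, ?_⟩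
  rw [integral_finsetSum _ fun k _ => hi k,
    Finset.sum_congr rfl fun k _ => (aux_gauss P _ (hξk k) (hg k)).2.2]
  simp

lemma aux_task {d T n : ℕ} (hT : 1 ≤ T) (hn : 1 ≤ n) {ι : Type*} (Γ lam w : ℝ) (hΓ : 0 < Γ)
    (hlam : 0 < lam) (hw : 0 < w)
    (C : Set (EuclideanSpace ℝ (Fin d))) (hCc : IsCompact C) (hC : Convex ℝ C)
    (ℓ : Fin n → EuclideanSpace ℝ (Fin d) → ℝ) (hd : ∀ j, Differentiable ℝ (ℓ j))
    (hsc : ∀ j, ConvexOn ℝ Set.univ (fun x => ℓ j x - lam / 2 * ‖x‖ ^ 2))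
    (hlip : ∀ j, ∀ x ∈ C, ∀ y ∈ C, |ℓ j x - ℓ j y| ≤ Γ * ‖x - y‖)
    (c : EuclideanSpace ℝ (Fin d)) (hc : c ∈ C)
    {Ω : Type*} {mΩ : MeasurableSpace Ω} (P : Measure Ω) [IsProbabilityMeasure P]
    (ξ : ι → Fin T → Ω → EuclideanSpace ℝ (Fin d)) (hξ : ∀ i t, Measurable (ξ i t))
    (hind : iIndepFun (m := fun _ => (inferInstance : MeasurableSpace ℝ))
          (fun p : (ι × Fin T) × Fin d => fun ω => ξ p.1.1 p.1.2 ω p.2) P)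
    (hgau : ∀ i t k, Measure.map (fun ω => ξ i t ω k) P = gaussianReal 0 1)
    (proj : EuclideanSpace ℝ (Fin d) → EuclideanSpace ℝ (Fin d))
    (hp : ∀ x, proj x ∈ C ∧ ∀ y ∈ C, ‖x - proj x‖ ≤ ‖x - y‖)
    (i : ι) (θ : ℕ → Ω → EuclideanSpace ℝ (Fin d)) (h0 : ∃ θ0 ∈ C, θ 0 = fun _ => θ0)
    (hrec : ∀ t : ℕ, (ht : t < T) →
          θ (t + 1) = fun ω =>
            proj (θ t ω -
              (1 / (w * (n : ℝ) * lam * (t + 1))) •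
                (w • gradient (fun x => ∑ j, ℓ j x) (θ t ω) +
                  (Γ * Real.sqrt (T / 2)) • ξ i ⟨t, ht⟩ ω))) :
    (∫ ω, (∑ j, ℓ j (θ T ω)) ∂P) - ∑ j, ℓ j c ≤
      4 * (Γ ^ 2 / lam) * (1 + Real.log T) * (n / T + d / 2 * (1 / (w ^ 2 * n))) := by
  have hnr : (1 : ℝ) ≤ n := by exact_mod_cast hn
  have hTr : (1 : ℝ) ≤ T := by exact_mod_cast hT
  set L : EuclideanSpace ℝ (Fin d) → ℝ := fun x => ∑ j, ℓ j x with hL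
  have hLd : Differentiable ℝ L := by
    rw [hL]; fun_prop
  set a : ℝ := n * lam with ha
  have ha0 : 0 < a := by positivity
  set B : ℝ := n * Γ with hB
  have hLsc : ConvexOn ℝ Set.univ (fun x => L x - a / 2 * ‖x‖ ^ 2) := by
    have h1 : ConvexOn ℝ Set.univ
        (∑ j : Fin n, fun x => ℓ j x - lam / 2 * ‖x‖ ^ 2) := by
      refine Finset.sum_induction _ (fun f => ConvexOn ℝ Set.univ f) (fun f g hf hg => hf.add hg)
        (convexOn_const 0 convex_univ) (fun j _ => hsc j)
    convert h1 using 1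
    ext x
    simp [hL, ha, Finset.sum_apply, Finset.sum_sub_distrib]
    ring
  have hLlip : ∀ x ∈ C, ∀ y ∈ C, |L x - L y| ≤ B * ‖x - y‖ := by
    intro x hx y hy
    simp only [hL]
    rw [← Finset.sum_sub_distrib]
    refine (Finset.abs_sum_le_sum_abs _ _).trans ?_
    refine (Finset.sum_le_sum fun j _ => hlip j x hx y hy).trans ?_
    simp [hB, mul_assoc]
  set τ : ℝ := Γ * Real.sqrt (T / 2) / w with hτ
  set ξ' : ℕ → Ω → EuclideanSpace ℝ (Fin d) :=
    fun t => if ht : t < T then ξ i ⟨t, ht⟩ else 0 with hξ'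
  have hξ'e : ∀ t (ht : t < T), ξ' t = ξ i ⟨t, ht⟩ := by
    intro t ht; simp [hξ', ht]
  have hrec' : ∀ t < T, ∀ ω, θ (t + 1) ω = proj (θ t ω - (1 / (a * ((t : ℝ) + 1))) •
      (gradient L (θ t ω) + τ • ξ' t ω)) := by
    intro t ht ω
    rw [hrec t ht, hξ'e t ht]
    simp only
    congr 2
    rw [hτ, ha, smul_add, smul_add, smul_smul, smul_smul, smul_smul]
    congr 2 <;> field_simp
  have hθC : ∀ t ≤ T, ∀ ω, θ t ω ∈ C := by
    intro t ht ω
    cases t with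
    | zero => obtain ⟨θ0, h, e⟩ := h0; rw [e]; exact h
    | succ t => rw [hrec' t (by omega)]; exact (hp _).1
  -- past sigma-algebras
  set f : (ι × Fin T) × Fin d → Ω → ℝ := fun p ω => ξ p.1.1 p.1.2 ω p.2 with hf
  have hfm : ∀ p, Measurable (f p) := by
    intro p
    have := hξ p.1.1 p.1.2
    simp only [hf]; fun_prop
  set M : ℕ → MeasurableSpace Ω := fun t =>
    ⨆ p ∈ {p : (ι × Fin T) × Fin d | p.1.2.val < t},
      MeasurableSpace.comap (f p) inferInstance with hM
  have hMle : ∀ t, M t ≤ mΩ := fun t => iSup₂_le fun p _ => (hfm p).comap_le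
  have hMmono : ∀ s t, s ≤ t → M s ≤ M t := by
    intro s t hst
    exact biSup_mono fun p hp => lt_of_lt_of_le hp hst
  have hMf : ∀ p t, p.1.2.val < t → Measurable[M t] (f p) := by
    intro p t hpt
    exact measurable_iff_comap_le.2
      (le_iSup₂_of_le (f := fun p (_ : p ∈ {p : (ι × Fin T) × Fin d | p.1.2.val < t}) =>
        MeasurableSpace.comap (f p) inferInstance) p hpt le_rfl)
  have hgm : Measurable (gradient L) := by
    unfold gradient
    exact (LinearIsometryEquiv.continuous _).measurable.comp (measurable_fderiv ℝ L)
  have hpm : Measurable proj := (aux_proj_cont hC hp).measurable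
  have hθM : ∀ t ≤ T, Measurable[M t] (θ t) := by
    intro t
    induction t with
    | zero => intro _; obtain ⟨θ0, h, e⟩ := h0; rw [e]; exact measurable_const
    | succ t ih =>
      intro ht
      have h1 : Measurable[M (t + 1)] (θ t) := (ih (by omega)).mono (hMmono _ _ (by omega)) le_rfl
      have h2 : Measurable[M (t + 1)] (ξ' t) := by
        rw [hξ'e t (by omega)]
        have h3 : Measurable[M (t + 1)] (fun ω => WithLp.ofLp (ξ i ⟨t, by omega⟩ ω)) := by
          refine @measurable_pi_lambda _ _ _ (M (t + 1)) _ _ fun k => ?_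
          exact hMf ((i, ⟨t, by omega⟩), k) (t + 1) (Nat.lt_succ_self t)
        exact (WithLp.measurable_toLp 2 (Fin d → ℝ)).comp h3
      have h4 : θ (t + 1) = fun ω => proj (θ t ω - (1 / (a * ((t : ℝ) + 1))) •
        (gradient L (θ t ω) + τ • ξ' t ω)) := funext (hrec' t (by omega))
      rw [h4]
      have h5 : Measurable (fun q : EuclideanSpace ℝ (Fin d) × EuclideanSpace ℝ (Fin d) =>
        proj (q.1 - (1 / (a * ((t : ℝ) + 1))) • (gradient L q.1 + τ • q.2))) := by
        fun_prop
      exact h5.comp (h1.prodMk h2)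
  have hindM : ∀ t (ht : t < T) k, Indep
      (MeasurableSpace.comap (fun ω => ξ i ⟨t, ht⟩ ω k) inferInstance) (M t) P := by
    intro t ht k
    have h1 := indep_iSup_of_disjoint (fun p => (hfm p).comap_le)
      ((iIndepFun_iff_iIndep _ _ _).1 hind)
      (S := {((i, ⟨t, ht⟩), k)}) (T := {p : (ι × Fin T) × Fin d | p.1.2.val < t}) (by simp)
    rw [iSup_singleton] at h1
    exact h1
  obtain ⟨R, hR⟩ := hCc.isBounded.exists_norm_le
  have main := aux_core P hCc hC hp L hLd.continuous (gradient L) a B (τ ^ 2 * d) ha0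
    (by positivity) (aux_sc hLd a hLsc) (aux_lip hLd hC B hLlip) T hT θ (fun t ω => τ • ξ' t ω)
    (fun t ht => (hθM t ht).mono (hMle t) le_rfl) hθC hrec'
    (by
      intro t ht
      have := aux_normsq P (ξ i ⟨t, ht⟩) (hξ _ _) (hgau _ _)
      simp only [hξ'e t ht, norm_smul, mul_pow, Real.norm_eq_abs, sq_abs]
      refine ⟨this.1.const_mul _, ?_⟩
      rw [integral_const_mul, this.2])
    (by
      intro t ht Y hY
      have hYm : Measurable[M t] Y := by
        rcases hY with ⟨c, _, rfl⟩ | ⟨s, hs, rfl⟩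
        · exact measurable_const
        · exact (hθM s (by omega)).mono (hMmono _ _ hs) le_rfl
      have hYC : ∀ ω, Y ω ∈ C := by
        rcases hY with ⟨c, hc, rfl⟩ | ⟨s, hs, rfl⟩
        · exact fun _ => hc
        · exact hθC s (by omega)
      have hm : Measurable[M t] (fun ω => Y ω - θ t ω) := hYm.sub (hθM t ht.le)
      have := aux_orth (M t) P (hMle t) (ξ i ⟨t, ht⟩) (fun ω => Y ω - θ t ω) (hξ _ _) hm (R + R)
        (fun ω => (norm_sub_le _ _).trans (add_le_add (hR _ (hYC ω)) (hR _ (hθC t ht.le ω))))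
        (hindM t ht) (hgau _ _)
      simp only [hξ'e t ht, inner_smul_left, conj_trivial]
      refine ⟨this.1.const_mul _, ?_⟩
      rw [integral_const_mul, this.2, mul_zero])
    c hc
  refine main.trans (le_of_eq ?_)
  have hτ2 : τ ^ 2 = Γ ^ 2 * (T / 2) / w ^ 2 := by
    rw [hτ, div_pow, mul_pow, Real.sq_sqrt (by positivity)]
  rw [hτ2, hB, ha]
  field_simp

/-- Utility of task-weighted noisy gradient descent, strongly convex case (Theorem 4(b)):
there is a universal constant `K > 0` such that, with per-example losses `ℓ i j`
differentiable, `λ`-strongly convex (i.e. `ℓ i j - (λ/2)‖·‖²` is convex) and `Γ`-Lipschitz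
on a compact convex `C`, task objectives `L i = ∑ j, ℓ i j` minimized over `C` at `θ* i`,
positive task weights `w i`, `T = ⌈(2/d) (∑ i, nᵢ)/(∑ i, 1/(wᵢ² nᵢ))⌉`, independent
standard Gaussian noise vectors `ξ i t`, and the noisy projected GD iterates with step
sizes `η i t = 1/(wᵢ nᵢ λ t)`, the total excess empirical risk of the final iterates is
at most `K (Γ²/λ) d (1 + log T) ∑ i, 1/(wᵢ² nᵢ)`. -/
theorem stmt9 :
    ∃ K : ℝ, 0 < K ∧
      ∀ (d m : ℕ), 1 ≤ d → 1 ≤ m →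
      ∀ nn : Fin m → ℕ, (∀ i, 1 ≤ nn i) →
      ∀ Γ lam : ℝ, 0 < Γ → 0 < lam →
      ∀ C : Set (EuclideanSpace ℝ (Fin d)), C.Nonempty → IsCompact C → Convex ℝ C →
      ∀ ℓ : (i : Fin m) → Fin (nn i) → EuclideanSpace ℝ (Fin d) → ℝ,
        (∀ i j, Differentiable ℝ (ℓ i j)) →
        (∀ i j, ConvexOn ℝ Set.univ (fun x => ℓ i j x - lam / 2 * ‖x‖ ^ 2)) →
        (∀ i j, ∀ x ∈ C, ∀ y ∈ C, |ℓ i j x - ℓ i j y| ≤ Γ * ‖x - y‖) →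
      ∀ θstar : Fin m → EuclideanSpace ℝ (Fin d),
        (∀ i, θstar i ∈ C) → (∀ i, ∀ y ∈ C, (∑ j, ℓ i j (θstar i)) ≤ ∑ j, ℓ i j y) →
      ∀ w : Fin m → ℝ, (∀ i, 0 < w i) →
      ∀ T : ℕ,
        T = ⌈(2 / (d : ℝ)) * (∑ i, (nn i : ℝ)) / (∑ i, 1 / (w i ^ 2 * (nn i : ℝ)))⌉₊ →
      ∀ (Ω : Type) (_ : MeasureSpace Ω), IsProbabilityMeasure (ℙ : Measure Ω) →
      ∀ ξ : Fin m → Fin T → Ω → EuclideanSpace ℝ (Fin d),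
        (∀ i t, Measurable (ξ i t)) →
        iIndepFun (m := fun _ => (inferInstance : MeasurableSpace ℝ))
          (fun p : (Fin m × Fin T) × Fin d => fun ω => ξ p.1.1 p.1.2 ω p.2) ℙ →
        (∀ i t k, Measure.map (fun ω => ξ i t ω k) ℙ = gaussianReal 0 1) →
      ∀ proj : EuclideanSpace ℝ (Fin d) → EuclideanSpace ℝ (Fin d),
        (∀ x, proj x ∈ C ∧ ∀ y ∈ C, ‖x - proj x‖ ≤ ‖x - y‖) →
      ∀ θ : Fin m → ℕ → Ω → EuclideanSpace ℝ (Fin d),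
        (∀ i, ∃ θ0 ∈ C, θ i 0 = fun _ => θ0) →
        (∀ i, ∀ t : ℕ, (ht : t < T) →
          θ i (t + 1) = fun ω =>
            proj (θ i t ω -
              (1 / (w i * (nn i : ℝ) * lam * (t + 1))) •
                (w i • gradient (fun x => ∑ j, ℓ i j x) (θ i t ω) +
                  (Γ * Real.sqrt (T / 2)) • ξ i ⟨t, ht⟩ ω))) →
      (∑ i, ∫ ω, (∑ j, ℓ i j (θ i T ω)) ∂(ℙ : Measure Ω)) - (∑ i, ∑ j, ℓ i j (θstar i)) ≤
        K * (Γ ^ 2 / lam) * d * (1 + Real.log T) * ∑ i, 1 / (w i ^ 2 * (nn i : ℝ)) := by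
  refine ⟨4, by norm_num, ?_⟩
  intro d m hd hm nn hnn Γ lam hΓ hlam C hCne hCc hC ℓ hdiff hsc hlip θstar hθs hmin w hw T hT
    Ω _ hP ξ hξ hind hgau proj hp θ h0 hrec
  have hmne : Nonempty (Fin m) := ⟨⟨0, hm⟩⟩
  have hdr : (1 : ℝ) ≤ d := by exact_mod_cast hd
  have hnr : ∀ i, (0 : ℝ) < nn i := fun i => by exact_mod_cast hnn i
  set S := ∑ i, 1 / (w i ^ 2 * (nn i : ℝ)) with hS
  set N := ∑ i, (nn i : ℝ) with hN
  have hS0 : 0 < S := Finset.sum_pos (fun i _ => by have := hw i; have := hnr i; positivity)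
    Finset.univ_nonempty
  have hN0 : 0 < N := Finset.sum_pos (fun i _ => hnr i) Finset.univ_nonempty
  have hT1 : 1 ≤ T := by
    rw [hT]; exact Nat.ceil_pos.2 (by positivity)
  have hTr : (1 : ℝ) ≤ T := by exact_mod_cast hT1
  have hTge : 2 / (d : ℝ) * N / S ≤ T := by
    rw [hT]; exact Nat.le_ceil _
  have hNT : N / T ≤ d / 2 * S := by
    rw [div_le_iff₀ hS0] at hTge
    rw [div_le_iff₀ (by linarith)]
    have : N = d / 2 * (2 / (d : ℝ) * N) := by field_simp
    rw [this]
    have := mul_le_mul_of_nonneg_left hTge (by positivity : (0 : ℝ) ≤ d / 2)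
    linarith
  have hlog : 0 ≤ Real.log T := Real.log_nonneg hTr
  rw [← Finset.sum_sub_distrib]
  calc _ ≤ ∑ i, 4 * (Γ ^ 2 / lam) * (1 + Real.log T)
        * (nn i / T + d / 2 * (1 / (w i ^ 2 * nn i))) := by
        apply Finset.sum_le_sum
        intro i _
        exact aux_task hT1 (hnn i) Γ lam (w i) hΓ hlam (hw i) C hCc hC (ℓ i) (hdiff i) (hsc i)
          (hlip i) (θstar i) (hθs i) ℙ ξ hξ hind hgau proj hp i (θ i) (h0 i) (hrec i)
    _ = 4 * (Γ ^ 2 / lam) * (1 + Real.log T) * (N / T + d / 2 * S) := by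
        rw [← Finset.mul_sum, Finset.sum_add_distrib, ← Finset.sum_div, ← Finset.mul_sum]
    _ ≤ 4 * (Γ ^ 2 / lam) * (1 + Real.log T) * (d * S) := by
        gcongr
        linarith
    _ = _ := by ring
end

section
/- There exists a universal constant K > 0 with the following property (Theorem 5(c) with the adaptive weights made explicit). Let d, m ≥ 1 and n₁,…,n_m ≥ 1 be integers, let n > 0 and β̄ > 0 be reals, Γ > 0, λ > 0, and let C ⊆ ℝ^d be a nonempty compact convex set. For each i ∈ {1,…,m} and j ∈ {1,…,n_i}, let ℓ_{ij} : ℝ^d → ℝ be differentiable, λ-strongly convex, and Γ-Lipschitz on C; set L_i = ∑_{j=1}^{n_i} ℓ_{ij} and let θ*_i be the minimizer of L_i over C. Define the adaptive weights by ω_i² = n β̄/(m n_i), set T = ⌈(2/d)·(∑_{i=1}^m n_i)/(∑_{i=1}^m 1/(ω_i² n_i))⌉, let (ξ_i⁽ᵗ⁾)_{i ∈ [m], t ∈ [T]} be independent standard Gaussian random vectors in ℝ^d, let θ_i⁽⁰⁾ ∈ C be deterministic, and define θ_i⁽ᵗ⁾ = Π_C( θ_i⁽ᵗ⁻¹⁾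 − η_i⁽ᵗ⁾( ω_i ∇L_i(θ_i⁽ᵗ⁻¹⁾) + Γ√(T/2)·ξ_i⁽ᵗ⁾ ) ) with η_i⁽ᵗ⁾ = 1/(ω_i n_i λ t). Then ∑_{i=1}^m E[L_i(θ_i⁽ᵀ⁾)] − ∑_{i=1}^m L_i(θ*_i) ≤ K · (Γ² d m² (1 + log T)) / (n λ β̄). -/
open MeasureTheory ProbabilityTheory

lemma seq_last (a : ℕ → ℝ) (T : ℕ) (hT : 1 ≤ T) (c f : ℝ) (hc : 0 ≤ c)
    (h1 : ∀ s, s < T → ∑ t ∈ Finset.Ico s T, (a (t + 1) - a s) ≤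
      c * ∑ t ∈ Finset.Ico s T, 1 / ((t : ℝ) + 1))
    (h2 : ∑ t ∈ Finset.Ico 0 T, (a (t + 1) - f) ≤
      c * ∑ t ∈ Finset.Ico 0 T, 1 / ((t : ℝ) + 1)) :
    a T - f ≤ 3 * c * (1 + Real.log T) / T := by
  have hTp : (0 : ℝ) < T := by exact_mod_cast hT
  have key : ∀ k : ℕ, 1 ≤ k → k ≤ T →
      a T ≤ (∑ t ∈ Finset.Ico (T - k) T, a (t + 1)) / k
        + c * ∑ j ∈ Finset.Ico 1 k, 1 / (((j : ℝ) + 1) * ((T : ℝ) - j + 1)) := by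
    intro k hk
    induction k, hk using Nat.le_induction with
    | base =>
      intro _
      have : Finset.Ico (T - 1) T = {T - 1} := by
        ext x; simp; omega
      rw [this]
      simp [Nat.sub_add_cancel hT]
    | succ k hk ih =>
      intro hkT
      have ih' := ih (by omega)
      have hs := h1 (T - k) (by omega)
      have e1 : ∑ t ∈ Finset.Ico (T - (k + 1)) T, a (t + 1)
          = a (T - k) + ∑ t ∈ Finset.Ico (T - k) T, a (t + 1) := by
        rw [Finset.sum_eq_sum_Ico_succ_bot (by omega)]
        have : T - (k + 1) + 1 = T - k := by omega
        rw [this]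
      rw [e1, Finset.sum_Ico_succ_top hk]
      rw [Finset.sum_sub_distrib] at hs
      simp only [Finset.sum_const, Nat.card_Ico, nsmul_eq_mul] at hs
      have hk2 : T - (T - k) = k := by omega
      rw [hk2] at hs
      have hkp : (0 : ℝ) < k := by exact_mod_cast hk
      have hkT' : (k : ℝ) + 1 ≤ T := by exact_mod_cast hkT
      have hb : ∑ t ∈ Finset.Ico (T - k) T, 1 / ((t : ℝ) + 1) ≤ k * (1 / ((T : ℝ) - k + 1)) := by
        have := Finset.sum_le_card_nsmul (Finset.Ico (T - k) T)
          (fun t : ℕ => 1 / ((t : ℝ) + 1)) (1 / ((T : ℝ) - k + 1)) (by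
            intro t ht
            rw [Finset.mem_Ico] at ht
            have : T ≤ t + k := by omega
            have : (T : ℝ) ≤ t + k := by exact_mod_cast this
            apply one_div_le_one_div_of_le <;> linarith)
        simpa [hk2] using this
      set P := ∑ t ∈ Finset.Ico (T - k) T, a (t + 1)
      have h3 : P - k * a (T - k) ≤ c * (k * (1 / ((T : ℝ) - k + 1))) :=
        hs.trans (mul_le_mul_of_nonneg_left hb hc)
      have h4 : P / k - (a (T - k) + P) / (k + 1) = (P - k * a (T - k)) / (k * (k + 1)) := by
        field_simp
        ring
      have h5 : (P - k * a (T - k)) / (k * (k + 1)) ≤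
          c * (1 / (((k : ℝ) + 1) * ((T : ℝ) - k + 1))) := by
        have h6 : (0 : ℝ) < T - k + 1 := by linarith
        calc _ ≤ (c * (k * (1 / ((T : ℝ) - k + 1)))) / (k * (k + 1)) := by gcongr
          _ = _ := by field_simp
      push_cast
      rw [mul_add]
      linarith
  have hT' := key T hT le_rfl
  rw [Nat.sub_self] at hT'
  set H := ∑ t ∈ Finset.Ico 0 T, 1 / ((t : ℝ) + 1) with hH
  have hH1 : H ≤ 1 + Real.log T := by
    have := harmonic_le_one_add_log T
    rw [harmonic] at this
    push_cast at this
    simpa [hH, one_div] using this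
  have hsub : ∑ j ∈ Finset.Ico 1 T, 1 / ((j : ℝ) + 1) ≤ H := by
    apply Finset.sum_le_sum_of_subset_of_nonneg
    · intro x; simp
    · intros; positivity
  have hrefl : ∑ j ∈ Finset.Ico 1 T, 1 / ((T : ℝ) - j + 1) =
      ∑ j ∈ Finset.Ico 1 T, 1 / ((j : ℝ) + 1) := by
    apply Finset.sum_nbij' (fun j => T - j) (fun j => T - j)
    · intro j hj; simp at hj ⊢; omega
    · intro j hj; simp at hj ⊢; omega
    · intro j hj; simp at hj ⊢; omega
    · intro j hj; simp at hj ⊢; omega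
    · intro j hj
      simp at hj
      rw [Nat.cast_sub (by omega)]
  have hsum : ∑ j ∈ Finset.Ico 1 T, 1 / (((j : ℝ) + 1) * ((T : ℝ) - j + 1)) ≤ 2 * H / T := by
    have : ∑ j ∈ Finset.Ico 1 T, 1 / (((j : ℝ) + 1) * ((T : ℝ) - j + 1)) =
        (∑ j ∈ Finset.Ico 1 T, 1 / ((j : ℝ) + 1) + ∑ j ∈ Finset.Ico 1 T, 1 / ((T : ℝ) - j + 1))
          / (T + 2) := by
      rw [← Finset.sum_add_distrib, Finset.sum_div]
      apply Finset.sum_congr rfl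
      intro j hj
      rw [Finset.mem_Ico] at hj
      have : (j : ℝ) + 1 ≤ T := by exact_mod_cast hj.2
      have : (0 : ℝ) < T - j + 1 := by linarith
      field_simp
      ring
    rw [this, hrefl]
    have : 0 ≤ H := Finset.sum_nonneg (by intros; positivity)
    apply div_le_div₀ <;> linarith
  rw [Finset.sum_sub_distrib] at h2
  simp only [Finset.sum_const, Nat.card_Ico, nsmul_eq_mul, Nat.sub_zero] at h2
  have h7 : (∑ t ∈ Finset.Ico 0 T, a (t + 1)) / T - f ≤ c * H / T := by
    rw [div_sub' hTp.ne']
    gcongr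
  calc a T - f ≤ c * H / T + c * (2 * H / T) := by
        have := mul_le_mul_of_nonneg_left hsum hc
        linarith
    _ = 3 * c * H / T := by ring
    _ ≤ _ := by gcongr

lemma det_step {E : Type*} [NormedAddCommGroup E] [InnerProductSpace ℝ E] {C : Set E}
    (hC : Convex ℝ C) (F : E → ℝ) (A μ η : ℝ) (hη : 0 < η)
    (θ u p g z : E) (hu : u ∈ C) (hp : p ∈ C)
    (h1 : F θ + inner ℝ g (u - θ) + μ / 2 * ‖u - θ‖ ^ 2 ≤ F u)
    (h2 : - (A * ‖p - θ‖) ≤ inner ℝ g (p - θ))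
    (h3 : F p - F θ ≤ A * ‖p - θ‖)
    (hproj : ∀ y ∈ C, ‖(θ - η • (g + z)) - p‖ ≤ ‖(θ - η • (g + z)) - y‖) :
    η * (F p - F u) ≤ 1 / 2 * (1 - η * μ) * ‖θ - u‖ ^ 2 - 1 / 2 * ‖p - u‖ ^ 2
      + η * inner ℝ z (u - θ) + η ^ 2 * (4 * A ^ 2 + ‖z‖ ^ 2) := by
  have hv : inner ℝ ((θ - η • (g + z)) - p) (u - p) ≤ 0 := by
    have := (norm_eq_iInf_iff_real_inner_le_zero hC (u := θ - η • (g + z)) hp).1 (by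
      have : Nonempty C := ⟨⟨p, hp⟩⟩
      apply le_antisymm
      · exact le_ciInf (fun y => hproj y y.2)
      · exact ciInf_le ⟨0, by rintro _ ⟨y, rfl⟩; exact norm_nonneg _⟩ (⟨p, hp⟩ : C))
    exact this u hu
  have hz : inner ℝ z (p - θ) ≥ - (‖z‖ * ‖p - θ‖) := by
    have := abs_real_inner_le_norm z (p - θ)
    rw [abs_le] at this; linarith
  set q := p - θ with hq
  set v := u - θ with hvv
  have e1 : (θ - η • (g + z)) - p = -q - η • (g + z) := by rw [hq]; abel
  have e2 : u - p = v - q := by rw [hq, hvv]; abel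
  have e3 : ‖θ - u‖ ^ 2 = ‖v‖ ^ 2 := by rw [hvv, norm_sub_rev]
  have e4 : ‖p - u‖ ^ 2 = ‖v‖ ^ 2 - 2 * inner ℝ q v + ‖q‖ ^ 2 := by
    have : p - u = q - v := by rw [hq, hvv]; abel
    rw [this, norm_sub_sq_real]; ring
  rw [e1, e2] at hv
  simp only [inner_sub_left, inner_sub_right, inner_neg_left, inner_smul_left, inner_add_left,
    real_inner_self_eq_norm_sq, RCLike.conj_to_real] at hv
  rw [e3, e4]
  have h1' := mul_le_mul_of_nonneg_left h1 hη.le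
  have h2' := mul_le_mul_of_nonneg_left h2 hη.le
  have h3' := mul_le_mul_of_nonneg_left h3 hη.le
  have hz' := mul_le_mul_of_nonneg_left hz hη.le
  nlinarith [sq_nonneg (‖q‖ - η * (2 * A + ‖z‖)), sq_nonneg (η * (2 * A - ‖z‖))]

lemma grad_lower {E : Type*} [NormedAddCommGroup E] [InnerProductSpace ℝ E] [CompleteSpace E]
    (F : E → ℝ) (hF : Differentiable ℝ F) (lam : ℝ)
    (hc : ConvexOn ℝ Set.univ (fun x => F x - lam / 2 * ‖x‖ ^ 2)) (x y : E) :
    F x + inner ℝ (gradient F x) (y - x) + lam / 2 * ‖y - x‖ ^ 2 ≤ F y := by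
  have hcl : ConvexOn ℝ Set.univ
      ((fun x => F x - lam / 2 * ‖x‖ ^ 2) ∘ (AffineMap.lineMap x y : ℝ →ᵃ[ℝ] E)) := by
    have := hc.comp_affineMap (AffineMap.lineMap x y : ℝ →ᵃ[ℝ] E)
    simpa using this
  have hl : HasDerivAt (AffineMap.lineMap x y : ℝ → E) (y - x) 0 :=
    AffineMap.hasDerivAt_lineMap
  have hg : HasFDerivAt F (InnerProductSpace.toDual ℝ E (gradient F x))
      ((AffineMap.lineMap x y : ℝ → E) 0) := by
    simpa using (hF x).hasGradientAt.hasFDerivAt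
  have hd1 := hg.comp_hasDerivAt (0 : ℝ) hl
  have hd2 := (hl.norm_sq).const_mul (lam / 2)
  have hd := hd1.sub hd2
  have := hcl.le_slope_of_hasDerivAt (x := 0) (y := 1) trivial trivial zero_lt_one hd
  simp only [slope_def_field, Function.comp, AffineMap.lineMap_apply_zero,
    AffineMap.lineMap_apply_one, sub_zero, div_one, InnerProductSpace.toDual_apply_apply] at this
  have e : ‖y‖ ^ 2 = ‖x‖ ^ 2 + 2 * inner ℝ x (y - x) + ‖y - x‖ ^ 2 := by
    rw [← norm_add_sq_real]; simp
  rw [e] at this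
  linarith

lemma grad_lip {E : Type*} [NormedAddCommGroup E] [InnerProductSpace ℝ E] [CompleteSpace E]
    {C : Set E} (hC : Convex ℝ C)
    (F : E → ℝ) (hF : Differentiable ℝ F) (A : ℝ)
    (hA : ∀ x ∈ C, ∀ y ∈ C, |F x - F y| ≤ A * ‖x - y‖) (x y : E) (hx : x ∈ C) (hy : y ∈ C) :
    -(A * ‖y - x‖) ≤ inner ℝ (gradient F x) (y - x) := by
  have hl : HasDerivAt (AffineMap.lineMap x y : ℝ → E) (y - x) 0 :=
    AffineMap.hasDerivAt_lineMap
  have hg : HasFDerivAt F (InnerProductSpace.toDual ℝ E (gradient F x))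
      ((AffineMap.lineMap x y : ℝ → E) 0) := by
    simpa using (hF x).hasGradientAt.hasFDerivAt
  have hd1 := (hg.comp_hasDerivAt (0 : ℝ) hl).tendsto_slope_zero_right
  refine ge_of_tendsto hd1 ?_
  filter_upwards [Ioo_mem_nhdsGT (zero_lt_one (α := ℝ))] with t ht
  have hm : (AffineMap.lineMap x y : ℝ → E) t ∈ C := hC.lineMap_mem hx hy ⟨ht.1.le, ht.2.le⟩
  have h := hA _ hm x hx
  have e : ‖(AffineMap.lineMap x y : ℝ → E) t - x‖ = t * ‖y - x‖ := by
    simp [AffineMap.lineMap_apply, norm_smul, abs_of_pos ht.1]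
  rw [e, abs_le] at h
  simp only [zero_add, Function.comp, AffineMap.lineMap_apply_zero, smul_eq_mul]
  rw [inv_mul_eq_div, le_div_iff₀ ht.1]
  linarith [h.1]

lemma exp_step {d : ℕ} {Ω : Type} (M : MeasurableSpace Ω) [mΩ : MeasurableSpace Ω] (P : Measure Ω)
    [IsProbabilityMeasure P]
    (ξ : Ω → EuclideanSpace ℝ (Fin d)) (hξ : Measurable ξ)
    (hlaw : ∀ k, Measure.map (fun ω => ξ ω k) P = gaussianReal 0 1)
    (hM : M ≤ mΩ)
    (hind : ∀ k, Indep M (MeasurableSpace.comap (fun ω => ξ ω k) inferInstance) P)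
    {C : Set (EuclideanSpace ℝ (Fin d))} (hC : Convex ℝ C) (hCc : IsCompact C)
    (F : EuclideanSpace ℝ (Fin d) → ℝ) (hF : Continuous F)
    (G : EuclideanSpace ℝ (Fin d) → EuclideanSpace ℝ (Fin d))
    (A μ σ : ℝ) (hμ : 0 < μ)
    (h1 : ∀ x ∈ C, ∀ y ∈ C, F x + inner ℝ (G x) (y - x) + μ / 2 * ‖y - x‖ ^ 2 ≤ F y)
    (h2 : ∀ x ∈ C, ∀ y ∈ C, -(A * ‖y - x‖) ≤ inner ℝ (G x) (y - x))
    (h3 : ∀ x ∈ C, ∀ y ∈ C, |F x - F y| ≤ A * ‖x - y‖)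
    (proj : EuclideanSpace ℝ (Fin d) → EuclideanSpace ℝ (Fin d))
    (hproj : ∀ x, proj x ∈ C ∧ ∀ y ∈ C, ‖x - proj x‖ ≤ ‖x - y‖)
    (t : ℕ) (θ u p : Ω → EuclideanSpace ℝ (Fin d))
    (hθM : Measurable[M] θ) (huM : Measurable[M] u) (hpM : Measurable p)
    (hθ : ∀ ω, θ ω ∈ C) (hu : ∀ ω, u ω ∈ C)
    (hp : p = fun ω => proj (θ ω - (1 / (μ * (t + 1))) • (G (θ ω) + σ • ξ ω))) :
    (∫ ω, F (p ω) ∂P) - ∫ ω, F (u ω) ∂P ≤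
      μ / 2 * t * (∫ ω, ‖θ ω - u ω‖ ^ 2 ∂P) - μ / 2 * (t + 1) * (∫ ω, ‖p ω - u ω‖ ^ 2 ∂P)
        + (4 * A ^ 2 + σ ^ 2 * d) / μ * (1 / ((t : ℝ) + 1)) := by
  have hpC : ∀ ω, p ω ∈ C := fun ω => by rw [hp]; exact (hproj _).1
  have hθm : Measurable θ := hθM.mono hM le_rfl
  have hum : Measurable u := huM.mono hM le_rfl
  have hbdint : ∀ H : EuclideanSpace ℝ (Fin d) × EuclideanSpace ℝ (Fin d) → ℝ, Continuous H →
      ∀ a b : Ω → EuclideanSpace ℝ (Fin d), Measurable a → Measurable b → (∀ ω, a ω ∈ C) →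
      (∀ ω, b ω ∈ C) → Integrable (fun ω => H (a ω, b ω)) P := by
    intro H hH a b ha hb haC hbC
    obtain ⟨B, hB⟩ := (hCc.prod hCc).exists_bound_of_continuousOn hH.continuousOn
    exact Integrable.of_bound (hH.measurable.comp (ha.prodMk hb)).aestronglyMeasurable B
      (Filter.Eventually.of_forall fun ω => hB _ ⟨haC ω, hbC ω⟩)
  have hξk : ∀ k, Measurable (fun ω => ξ ω k) := fun k => by fun_prop
  have hk2 : ∀ k, MemLp (fun ω => ξ ω k) 2 P := by
    intro k
    have := memLp_id_gaussianReal (μ := 0) (v := 1) 2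
    rw [← hlaw k, memLp_map_measure_iff (f := fun ω => (ξ ω k : ℝ)) (g := (id : ℝ → ℝ)) (by fun_prop)
      (hξk k).aemeasurable] at this
    exact this
  have hk1 : ∀ k, Integrable (fun ω => ξ ω k) P := fun k => (hk2 k).integrable (by norm_num)
  have hk0 : ∀ k, ∫ ω, ξ ω k ∂P = 0 := by
    intro k
    have := integral_id_gaussianReal (μ := 0) (v := 1)
    rw [← hlaw k, integral_map (φ := fun ω => (ξ ω k : ℝ)) (f := fun x : ℝ => x) (hξk k).aemeasurable (by fun_prop)] at this
    exact this
  have hksq : ∀ k, ∫ ω, (ξ ω k) ^ 2 ∂P = 1 := by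
    intro k
    have h := variance_id_gaussianReal (μ := 0) (v := 1)
    rw [variance_of_integral_eq_zero (by fun_prop) (by simp)] at h
    rw [← hlaw k, integral_map (φ := fun ω => (ξ ω k : ℝ)) (f := fun x : ℝ => (id x) ^ 2) (hξk k).aemeasurable (by fun_prop)] at h
    simpa using h
  have hkind : ∀ k, IndepFun (fun ω => ξ ω k) (fun ω => (u ω - θ ω) k) P := by
    intro k
    rw [IndepFun_iff_Indep]
    have hm : Measurable[M] (fun ω => (u ω - θ ω) k) := by
      have a : Measurable[M] (fun ω => u ω - θ ω) := huM.sub hθM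
      have b : Measurable (fun x : EuclideanSpace ℝ (Fin d) => x k) := by fun_prop
      exact b.comp a
    exact indep_of_indep_of_le_right (hind k).symm hm.comap_le
  have hvk : ∀ k, Integrable (fun ω => (u ω - θ ω) k) P := fun k =>
    hbdint (fun q => (q.1 - q.2) k) (by fun_prop) u θ hum hθm hu hθ
  have hinn : ∀ ω, inner ℝ (σ • ξ ω) (u ω - θ ω) = ∑ k, σ * (ξ ω k * (u ω - θ ω) k) := by
    intro ω
    rw [inner_smul_left, PiLp.inner_apply, Finset.mul_sum]
    apply Finset.sum_congr rfl
    intro k _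
    simp [mul_comm]
  have hmulint : ∀ k, Integrable (fun ω => ξ ω k * (u ω - θ ω) k) P := fun k =>
    (hkind k).integrable_mul (hk1 k) (hvk k)
  have hI1 : Integrable (fun ω => inner ℝ (σ • ξ ω) (u ω - θ ω)) P := by
    simp_rw [hinn]
    exact integrable_finsetSum _ (fun k _ => (hmulint k).const_mul σ)
  have hI1v : ∫ ω, inner ℝ (σ • ξ ω) (u ω - θ ω) ∂P = 0 := by
    simp_rw [hinn]
    rw [integral_finsetSum _ (fun k _ => (hmulint k).const_mul σ)]
    apply Finset.sum_eq_zero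
    intro k _
    rw [integral_const_mul]
    have := (hkind k).integral_mul_eq_mul_integral (hξk k).aestronglyMeasurable
      (hvk k).aestronglyMeasurable
    simp only [Pi.mul_apply] at this
    rw [this, hk0 k]
    simp
  have hns : ∀ ω, ‖σ • ξ ω‖ ^ 2 = ∑ k, σ ^ 2 * (ξ ω k) ^ 2 := by
    intro ω
    rw [norm_smul, mul_pow, EuclideanSpace.norm_sq_eq, Finset.mul_sum]
    simp
  have hI2 : Integrable (fun ω => ‖σ • ξ ω‖ ^ 2) P := by
    simp_rw [hns]
    exact integrable_finsetSum _ (fun k _ => ((hk2 k).integrable_sq).const_mul _)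
  have hI2v : ∫ ω, ‖σ • ξ ω‖ ^ 2 ∂P = σ ^ 2 * d := by
    simp_rw [hns]
    rw [integral_finsetSum _ (fun k _ => ((hk2 k).integrable_sq).const_mul _)]
    simp_rw [integral_const_mul, hksq]
    simp [mul_comm]
  have htp : (0 : ℝ) < (t : ℝ) + 1 := by positivity
  have hpt : ∀ ω, F (p ω) - F (u ω) ≤ μ / 2 * t * ‖θ ω - u ω‖ ^ 2
      - μ / 2 * (t + 1) * ‖p ω - u ω‖ ^ 2 + inner ℝ (σ • ξ ω) (u ω - θ ω)
      + 1 / (μ * (t + 1)) * (4 * A ^ 2 + ‖σ • ξ ω‖ ^ 2) := by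
    intro ω
    have hηp : (0 : ℝ) < 1 / (μ * (t + 1)) := by positivity
    have := det_step hC F A μ (1 / (μ * (t + 1))) hηp (θ ω) (u ω) (p ω)
      (G (θ ω)) (σ • ξ ω) (hu ω) (hpC ω) (h1 _ (hθ ω) _ (hu ω)) (h2 _ (hθ ω) _ (hpC ω))
      ((le_abs_self _).trans (h3 _ (hpC ω) _ (hθ ω)))
      (by
        have := (hproj (θ ω - (1 / (μ * (t + 1))) • (G (θ ω) + σ • ξ ω))).2
        rw [hp]; exact this)
    have h' := mul_le_mul_of_nonneg_left this (by positivity : (0 : ℝ) ≤ μ * (t + 1))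
    have e1 : μ * (t + 1) * (1 / (μ * (t + 1)) * (F (p ω) - F (u ω))) = F (p ω) - F (u ω) := by
      field_simp
    rw [e1] at h'
    refine h'.trans (le_of_eq ?_)
    field_simp
    ring
  have hIF : Integrable (fun ω => F (p ω)) P :=
    hbdint (fun q => F q.1) (by fun_prop) p p hpM hpM hpC hpC
  have hIFu : Integrable (fun ω => F (u ω)) P :=
    hbdint (fun q => F q.1) (by fun_prop) u u hum hum hu hu
  have hID : Integrable (fun ω => ‖θ ω - u ω‖ ^ 2) P :=
    hbdint (fun q => ‖q.1 - q.2‖ ^ 2) (by fun_prop) θ u hθm hum hθ hu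
  have hIDp : Integrable (fun ω => ‖p ω - u ω‖ ^ 2) P :=
    hbdint (fun q => ‖q.1 - q.2‖ ^ 2) (by fun_prop) p u hpM hum hpC hu
  have hA1 := hID.const_mul (μ / 2 * t)
  have hA2 := hIDp.const_mul (μ / 2 * (t + 1))
  have hA3 : Integrable (fun ω => 1 / (μ * (t + 1)) * (4 * A ^ 2 + ‖σ • ξ ω‖ ^ 2)) P :=
    ((integrable_const _).add hI2).const_mul _
  have hfin := integral_mono (hIF.sub hIFu) (((hA1.sub hA2).add hI1).add hA3) hpt
  rw [integral_sub' hIF hIFu] at hfin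
  rw [integral_add' ((hA1.sub hA2).add hI1) hA3, integral_add' (hA1.sub hA2) hI1,
    integral_sub' hA1 hA2, hI1v, integral_const_mul, integral_const_mul, integral_const_mul,
    integral_add (integrable_const _) hI2, hI2v] at hfin
  simp only [integral_const, probReal_univ, one_smul] at hfin
  refine hfin.trans (le_of_eq ?_)
  field_simp
  ring

lemma proj_cont {d : ℕ} {C : Set (EuclideanSpace ℝ (Fin d))} (hC : Convex ℝ C)
    (proj : EuclideanSpace ℝ (Fin d) → EuclideanSpace ℝ (Fin d))
    (hproj : ∀ x, proj x ∈ C ∧ ∀ y ∈ C, ‖x - proj x‖ ≤ ‖x - y‖) : Continuous proj := by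
  have hv : ∀ x, ∀ y ∈ C, inner ℝ (x - proj x) (y - proj x) ≤ 0 := by
    intro x
    refine (norm_eq_iInf_iff_real_inner_le_zero hC (hproj x).1).1 ?_
    have : Nonempty C := ⟨⟨_, (hproj x).1⟩⟩
    apply le_antisymm
    · exact le_ciInf (fun y => (hproj x).2 y y.2)
    · exact ciInf_le ⟨0, by rintro _ ⟨y, rfl⟩; exact norm_nonneg _⟩ (⟨_, (hproj x).1⟩ : C)
  have : LipschitzWith 1 proj := by
    apply LipschitzWith.of_dist_le_mul
    intro x y
    rw [dist_eq_norm, dist_eq_norm, NNReal.coe_one, one_mul]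
    have a := hv x _ (hproj y).1
    have b := hv y _ (hproj x).1
    have e : ‖proj x - proj y‖ ^ 2 = inner ℝ (x - y) (proj x - proj y)
        + inner ℝ (x - proj x) (proj y - proj x) + inner ℝ (y - proj y) (proj x - proj y) := by
      rw [← real_inner_self_eq_norm_sq]
      simp only [inner_sub_left, inner_sub_right]
      ring
    have c := real_inner_le_norm (x - y) (proj x - proj y)
    by_contra! h
    nlinarith [norm_nonneg (x - y), norm_nonneg (proj x - proj y)]
  exact this.continuous

lemma single {d T : ℕ} (hT : 1 ≤ T) {Ω : Type} [mΩ : MeasurableSpace Ω] (P : Measure Ω)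
    [IsProbabilityMeasure P]
    (ξ : Fin T → Ω → EuclideanSpace ℝ (Fin d)) (hξ : ∀ t, Measurable (ξ t))
    (hind : iIndepFun (m := fun _ => (inferInstance : MeasurableSpace ℝ))
      (fun p : Fin T × Fin d => fun ω => ξ p.1 ω p.2) P)
    (hlaw : ∀ t k, Measure.map (fun ω => ξ t ω k) P = gaussianReal 0 1)
    {C : Set (EuclideanSpace ℝ (Fin d))} (hC : Convex ℝ C) (hCc : IsCompact C)
    (F : EuclideanSpace ℝ (Fin d) → ℝ) (hF : Continuous F)
    (G : EuclideanSpace ℝ (Fin d) → EuclideanSpace ℝ (Fin d)) (hG : Measurable G)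
    (A μ σ : ℝ) (hμ : 0 < μ)
    (h1 : ∀ x ∈ C, ∀ y ∈ C, F x + inner ℝ (G x) (y - x) + μ / 2 * ‖y - x‖ ^ 2 ≤ F y)
    (h2 : ∀ x ∈ C, ∀ y ∈ C, -(A * ‖y - x‖) ≤ inner ℝ (G x) (y - x))
    (h3 : ∀ x ∈ C, ∀ y ∈ C, |F x - F y| ≤ A * ‖x - y‖)
    (proj : EuclideanSpace ℝ (Fin d) → EuclideanSpace ℝ (Fin d))
    (hproj : ∀ x, proj x ∈ C ∧ ∀ y ∈ C, ‖x - proj x‖ ≤ ‖x - y‖)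
    (θ : ℕ → Ω → EuclideanSpace ℝ (Fin d)) (h0 : ∃ θ0 ∈ C, θ 0 = fun _ => θ0)
    (hstep : ∀ t : ℕ, (ht : t < T) → θ (t + 1) = fun ω =>
      proj (θ t ω - (1 / (μ * (t + 1))) • (G (θ t ω) + σ • ξ ⟨t, ht⟩ ω)))
    (x : EuclideanSpace ℝ (Fin d)) (hx : x ∈ C) :
    (∫ ω, F (θ T ω) ∂P) - F x ≤
      3 * ((4 * A ^ 2 + σ ^ 2 * d) / μ) * (1 + Real.log T) / T := by
  have hpc := proj_cont hC proj hproj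
  let f : Fin T × Fin d → Ω → ℝ := fun p ω => ξ p.1 ω p.2
  have hfm : ∀ p, Measurable (f p) := fun p => by
    have := hξ p.1
    simp only [f]; fun_prop
  let M : ℕ → MeasurableSpace Ω := fun t =>
    ⨆ p ∈ {p : Fin T × Fin d | (p.1 : ℕ) < t}, MeasurableSpace.comap (f p) inferInstance
  have hM : ∀ t, M t ≤ mΩ := fun t => iSup₂_le fun p _ => (hfm p).comap_le
  have hMm : ∀ s t, s ≤ t → M s ≤ M t := fun s t hst =>
    biSup_mono (fun p hp => lt_of_lt_of_le hp hst)
  have hθM : ∀ t, t ≤ T → Measurable[M t] (θ t) := by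
    intro t
    induction t with
    | zero =>
      intro _
      obtain ⟨θ0, _, e⟩ := h0
      rw [e]; exact measurable_const
    | succ t ih =>
      intro ht
      have a : Measurable[M (t + 1)] (θ t) :=
        (ih (by omega)).mono (hMm _ _ (by omega)) le_rfl
      have b : Measurable[M (t + 1)] (ξ ⟨t, ht⟩) := by
        have : Measurable[M (t + 1)] (fun ω => (ξ ⟨t, ht⟩ ω).ofLp) := by
          refine @measurable_pi_lambda _ _ _ (M (t + 1)) _ _ (fun k => ?_)
          refine Measurable.mono (comap_measurable (f (⟨t, ht⟩, k))) ?_ le_rfl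
          exact le_biSup (fun p => MeasurableSpace.comap (f p) inferInstance)
            (show (⟨t, ht⟩, k) ∈ {p : Fin T × Fin d | (p.1 : ℕ) < t + 1} by simp)
        exact (WithLp.measurable_toLp 2 (Fin d → ℝ)).comp this
      rw [hstep t ht]
      have hq : Measurable (fun q : EuclideanSpace ℝ (Fin d) × EuclideanSpace ℝ (Fin d) =>
          proj (q.1 - (1 / (μ * (t + 1))) • (G q.1 + σ • q.2))) := by
        have := hpc.measurable
        fun_prop
      exact hq.comp (a.prodMk b)
  have hθC : ∀ t, t ≤ T → ∀ ω, θ t ω ∈ C := by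
    intro t ht ω
    cases t with
    | zero => obtain ⟨θ0, hθ0, e⟩ := h0; rw [e]; exact hθ0
    | succ t => rw [hstep t ht]; exact (hproj _).1
  have hMi : ∀ t (ht : t < T) k,
      Indep (M t) (MeasurableSpace.comap (fun ω => ξ ⟨t, ht⟩ ω k) inferInstance) P := by
    intro t ht k
    have hd : Disjoint {p : Fin T × Fin d | (p.1 : ℕ) < t} {((⟨t, ht⟩ : Fin T), k)} := by
      simp
    have := indep_iSup_of_disjoint (fun p => (hfm p).comap_le) hind.iIndep hd
    rw [iSup_singleton] at this
    exact this
  set c := (4 * A ^ 2 + σ ^ 2 * d) / μ with hc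
  have main : ∀ s, s ≤ T → ∀ u : Ω → EuclideanSpace ℝ (Fin d), Measurable[M s] u →
      (∀ ω, u ω ∈ C) → ∑ t ∈ Finset.Ico s T, ((∫ ω, F (θ (t + 1) ω) ∂P) - ∫ ω, F (u ω) ∂P) ≤
        μ / 2 * s * (∫ ω, ‖θ s ω - u ω‖ ^ 2 ∂P)
         + c * ∑ t ∈ Finset.Ico s T, 1 / ((t : ℝ) + 1) := by
    intro s hs u hu huC
    have : ∀ n, s ≤ n → n ≤ T →
        ∑ t ∈ Finset.Ico s n, ((∫ ω, F (θ (t + 1) ω) ∂P) - ∫ ω, F (u ω) ∂P) ≤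
        μ / 2 * s * (∫ ω, ‖θ s ω - u ω‖ ^ 2 ∂P) - μ / 2 * n * (∫ ω, ‖θ n ω - u ω‖ ^ 2 ∂P)
         + c * ∑ t ∈ Finset.Ico s n, 1 / ((t : ℝ) + 1) := by
      intro n hn
      induction n, hn using Nat.le_induction with
      | base => intro _; simp
      | succ n hn ih =>
        intro hnT
        have ih' := ih (by omega)
        rw [Finset.sum_Ico_succ_top hn, Finset.sum_Ico_succ_top hn]
        have := exp_step (M n) P (ξ ⟨n, hnT⟩) (hξ _) (hlaw _) (hM n) (hMi n hnT) hC hCc F hF G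
          A μ σ hμ h1 h2 h3 proj hproj n (θ n) u (θ (n + 1)) (hθM n (by omega))
          (hu.mono (hMm _ _ hn) le_rfl) ((hθM (n + 1) hnT).mono (hM _) le_rfl)
          (hθC n (by omega)) huC (hstep n hnT)
        rw [← hc] at this
        push_cast
        linarith
    have h := this T hs le_rfl
    have : 0 ≤ μ / 2 * T * (∫ ω, ‖θ T ω - u ω‖ ^ 2 ∂P) := by
      have : 0 ≤ (∫ ω, ‖θ T ω - u ω‖ ^ 2 ∂P) := integral_nonneg (fun _ => by positivity)
      positivity
    linarith
  apply seq_last (fun t => ∫ ω, F (θ t ω) ∂P) T hT c (F x) (by positivity)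
  · intro s hs
    have := main s hs.le (θ s) (hθM s hs.le) (hθC s hs.le)
    simpa using this
  · have := main 0 (by omega) (fun _ => x) measurable_const (fun _ => hx)
    simpa using this

/-- Theorem 5(c) with the adaptive weights made explicit: there is a universal constant
`K > 0` such that, with differentiable, `λ`-strongly convex (i.e. `ℓ - (λ/2)‖·‖²` convex),
`Γ`-Lipschitz per-example losses on a compact convex `C`, adaptive weights
`wᵢ = √(N β̄/(m nᵢ))` (so `wᵢ² = N β̄/(m nᵢ)`),
`T = ⌈(2/d)(∑ nᵢ)/(∑ 1/(wᵢ² nᵢ))⌉`, independent standard Gaussian noise, and noisy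
projected GD with step sizes `η i t = 1/(wᵢ nᵢ λ t)`, the total excess empirical risk of
the final iterates is at most `K Γ² d m² (1 + log T)/(N λ β̄)`. -/
theorem stmt11 :
    ∃ K : ℝ, 0 < K ∧
      ∀ (d m : ℕ), 1 ≤ d → 1 ≤ m →
      ∀ nn : Fin m → ℕ, (∀ i, 1 ≤ nn i) →
      ∀ N βbar : ℝ, 0 < N → 0 < βbar →
      ∀ Γ lam : ℝ, 0 < Γ → 0 < lam →
      ∀ C : Set (EuclideanSpace ℝ (Fin d)), C.Nonempty → IsCompact C → Convex ℝ C →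
      ∀ ℓ : (i : Fin m) → Fin (nn i) → EuclideanSpace ℝ (Fin d) → ℝ,
        (∀ i j, Differentiable ℝ (ℓ i j)) →
        (∀ i j, ConvexOn ℝ Set.univ (fun x => ℓ i j x - lam / 2 * ‖x‖ ^ 2)) →
        (∀ i j, ∀ x ∈ C, ∀ y ∈ C, |ℓ i j x - ℓ i j y| ≤ Γ * ‖x - y‖) →
      ∀ θstar : Fin m → EuclideanSpace ℝ (Fin d),
        (∀ i, θstar i ∈ C) → (∀ i, ∀ y ∈ C, (∑ j, ℓ i j (θstar i)) ≤ ∑ j, ℓ i j y) →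
      let w : Fin m → ℝ := fun i => Real.sqrt (N * βbar / (m * (nn i : ℝ)))
      ∀ T : ℕ,
        T = ⌈(2 / (d : ℝ)) * (∑ i, (nn i : ℝ)) / (∑ i, 1 / (w i ^ 2 * (nn i : ℝ)))⌉₊ →
      ∀ (Ω : Type) (_ : MeasureSpace Ω), IsProbabilityMeasure (ℙ : Measure Ω) →
      ∀ ξ : Fin m → Fin T → Ω → EuclideanSpace ℝ (Fin d),
        (∀ i t, Measurable (ξ i t)) →
        iIndepFun (m := fun _ => (inferInstance : MeasurableSpace ℝ))
          (fun p : (Fin m × Fin T) × Fin d => fun ω => ξ p.1.1 p.1.2 ω p.2) ℙ →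
        (∀ i t k, Measure.map (fun ω => ξ i t ω k) ℙ = gaussianReal 0 1) →
      ∀ proj : EuclideanSpace ℝ (Fin d) → EuclideanSpace ℝ (Fin d),
        (∀ x, proj x ∈ C ∧ ∀ y ∈ C, ‖x - proj x‖ ≤ ‖x - y‖) →
      ∀ θ : Fin m → ℕ → Ω → EuclideanSpace ℝ (Fin d),
        (∀ i, ∃ θ0 ∈ C, θ i 0 = fun _ => θ0) →
        (∀ i, ∀ t : ℕ, (ht : t < T) →
          θ i (t + 1) = fun ω =>
            proj (θ i t ω -
              (1 / (w i * (nn i : ℝ) * lam * (t + 1))) •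
                (w i • gradient (fun x => ∑ j, ℓ i j x) (θ i t ω) +
                  (Γ * Real.sqrt (T / 2)) • ξ i ⟨t, ht⟩ ω))) →
      (∑ i, ∫ ω, (∑ j, ℓ i j (θ i T ω)) ∂(ℙ : Measure Ω)) - (∑ i, ∑ j, ℓ i j (θstar i)) ≤
        K * (Γ ^ 2 * d * m ^ 2 * (1 + Real.log T)) / (N * lam * βbar) := by
  refine ⟨15 / 2, by norm_num, ?_⟩
  intro d m hd hm nn hnn N βbar hN hβ Γ lam hΓ hlam C hCne hCc hC ℓ hdiff hconv hlip θstar hsC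
    hsmin w T hT Ω mS hP ξ hξ hind hlaw proj hproj θ h0 hstep
  have hdp : (0 : ℝ) < d := by exact_mod_cast hd
  have hmp : (0 : ℝ) < m := by exact_mod_cast hm
  have hnp : ∀ i, (0 : ℝ) < nn i := fun i => by exact_mod_cast hnn i
  have hw2 : ∀ i, w i ^ 2 = N * βbar / (m * (nn i : ℝ)) := fun i =>
    Real.sq_sqrt (by have := hnp i; positivity)
  have hwp : ∀ i, 0 < w i := fun i => Real.sqrt_pos.2 (by have := hnp i; positivity)
  have hwn : ∀ i, 1 / (w i ^ 2 * (nn i : ℝ)) = m / (N * βbar) := by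
    intro i
    have := hnp i
    rw [hw2]
    field_simp
  have hsum : ∑ i, 1 / (w i ^ 2 * (nn i : ℝ)) = m ^ 2 / (N * βbar) := by
    simp_rw [hwn]
    simp
    ring
  rw [hsum] at hT
  have hne : (Finset.univ : Finset (Fin m)).Nonempty := ⟨⟨0, hm⟩, Finset.mem_univ _⟩
  have hSp : 0 < ∑ i, (nn i : ℝ) := Finset.sum_pos (fun i _ => hnp i) hne
  have hTpos : 0 < T := by
    rw [hT, Nat.ceil_pos]
    positivity
  have hTr : (0 : ℝ) < T := by exact_mod_cast hTpos
  have hTge : (2 / (d : ℝ)) * (∑ i, (nn i : ℝ)) / (m ^ 2 / (N * βbar)) ≤ T := by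
    conv_rhs => rw [hT]
    exact Nat.le_ceil _
  have hlog : 0 ≤ 1 + Real.log T := by
    have := Real.log_nonneg (by exact_mod_cast hTpos : (1 : ℝ) ≤ T)
    linarith
  have hi : ∀ i, (∫ ω, (∑ j, ℓ i j (θ i T ω)) ∂(ℙ : Measure Ω)) - ∑ j, ℓ i j (θstar i) ≤
      3 * (1 + Real.log T) * Γ ^ 2 / lam * (4 * nn i / T + d / 2 * (m / (N * βbar))) := by
    intro i
    have hw := hwp i
    have hn := hnp i
    set L : EuclideanSpace ℝ (Fin d) → ℝ := fun x => ∑ j, ℓ i j x with hL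
    have hLd : Differentiable ℝ L := by
      rw [hL]
      exact Differentiable.fun_sum (fun j _ => hdiff i j)
    have hLc : ConvexOn ℝ Set.univ (fun x => L x - (nn i * lam) / 2 * ‖x‖ ^ 2) := by
      have e : (fun x => L x - (nn i * lam) / 2 * ‖x‖ ^ 2) =
          ∑ j, (fun x => ℓ i j x - lam / 2 * ‖x‖ ^ 2) := by
        ext x
        rw [Finset.sum_apply, Finset.sum_sub_distrib]
        simp [hL]
        ring
      rw [e]
      have : ∀ s : Finset (Fin (nn i)),
          ConvexOn ℝ Set.univ (∑ j ∈ s, (fun x => ℓ i j x - lam / 2 * ‖x‖ ^ 2)) := by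
        intro s
        induction s using Finset.cons_induction with
        | empty => rw [Finset.sum_empty]; exact convexOn_const (0 : ℝ) convex_univ
        | cons a s ha ih => rw [Finset.sum_cons]; exact (hconv i a).add ih
      exact this _
    have hLl : ∀ x ∈ C, ∀ y ∈ C, |L x - L y| ≤ (nn i * Γ) * ‖x - y‖ := by
      intro x hx y hy
      rw [hL]
      simp only
      rw [← Finset.sum_sub_distrib]
      refine (Finset.abs_sum_le_sum_abs _ _).trans ?_
      refine (Finset.sum_le_sum (fun j _ => hlip i j x hx y hy)).trans ?_
      simp
      linarith
    have hGm : Measurable (gradient L) := by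
      exact (InnerProductSpace.toDual ℝ (EuclideanSpace ℝ (Fin d))).symm.continuous.measurable.comp
        (measurable_fderiv ℝ L)
    have hs := single (d := d) (T := T) hTpos (ℙ : Measure Ω) (ξ i) (hξ i)
      (iIndepFun.precomp (g := fun p : Fin T × Fin d => ((i, p.1), p.2))
        (by intro p q h; simpa [Prod.ext_iff] using h) hind)
      (hlaw i) hC hCc (fun x => w i * L x) (continuous_const.mul hLd.continuous)
      (fun x => w i • gradient L x) (by fun_prop) (w i * (nn i * Γ)) (w i * nn i * lam)
      (Γ * Real.sqrt (T / 2)) (by positivity)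
      (by
        intro x _ y _
        have := mul_le_mul_of_nonneg_left (grad_lower L hLd _ hLc x y) hw.le
        rw [inner_smul_left]
        simp only [RCLike.conj_to_real]
        linarith)
      (by
        intro x hx y hy
        have := mul_le_mul_of_nonneg_left (grad_lip hC L hLd _ hLl x y hx hy) hw.le
        rw [inner_smul_left]
        simp only [RCLike.conj_to_real]
        linarith)
      (by
        intro x hx y hy
        have := mul_le_mul_of_nonneg_left (hLl x hx y hy) hw.le
        rw [← mul_sub, abs_mul, abs_of_pos hw]
        linarith)
      proj hproj (θ i) (h0 i) (hstep i) (θstar i) (hsC i)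
    rw [integral_const_mul, ← mul_sub] at hs
    have hsq : Real.sqrt (T / 2) ^ 2 = T / 2 := Real.sq_sqrt (by positivity)
    rw [← hwn i]
    refine le_of_mul_le_mul_left (hs.trans (le_of_eq ?_)) hw
    rw [mul_pow Γ, hsq]
    field_simp
  rw [← Finset.sum_sub_distrib]
  refine (Finset.sum_le_sum (fun i _ => hi i)).trans ?_
  rw [← Finset.mul_sum, Finset.sum_add_distrib, ← Finset.sum_div, ← Finset.mul_sum]
  simp only [Finset.sum_const, Finset.card_univ, Fintype.card_fin, nsmul_eq_mul]
  have hb : (4 * ∑ i, (nn i : ℝ)) / T ≤ 2 * d * (m ^ 2 / (N * βbar)) := by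
    rw [div_le_iff₀ hTr]
    have h := mul_le_mul_of_nonneg_left hTge
      (by positivity : (0 : ℝ) ≤ 2 * d * (m ^ 2 / (N * βbar)))
    refine le_trans (le_of_eq ?_) h
    field_simp
    ring
  calc _ ≤ 3 * (1 + Real.log T) * Γ ^ 2 / lam *
        (2 * d * (m ^ 2 / (N * βbar)) + m * (d / 2 * (m / (N * βbar)))) := by gcongr
    _ = _ := by
      field_simp
      ring
end
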